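/- arXiv:math/0405393 — 2 statements merged into one kernel-verified Lean document; each statement's English description precedes it below -/
import Mathlib

section
/- Let d, q ≥ 1. (a) For every continuous map F : Δ^{(d+1)(q-1)} → ℝ^d, every winding partition of the restriction of F to the (d−1)-skeleton Δ_{d-1}^{(d+1)(q-1)} is a Tverberg partition of F. (b) If d ≥ 3, then for every continuous map f : Δ_{d-1}^{(d+1)(q-1)} → ℝ^d and every ε > 0 there exists a continuous map F : Δ^{(d+1)(q-1)} → ℝ^d with sup_{x ∈ Δ_{d-1}^{(d+1)(q-1)}} ‖F(x) − f(x)‖ < ε such that every Tverberg partition of F is a winding partition of f. -/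
open scoped BigOperators

noncomputable section

/-- Euclidean space `ℝ^d`. -/
abbrev Euc (d : ℕ) : Type := EuclideanSpace ℝ (Fin d)

/-- The standard `N`-simplex `Δ^N ⊆ ℝ^{N+1}`. -/
def stdSimp (N : ℕ) : Set (Fin (N+1) → ℝ) :=
  {x | (∀ i, 0 ≤ x i) ∧ ∑ i, x i = 1}

/-- The face `σ_S` of `Δ^N` spanned by the vertices in `S`. -/
def simpFace {N : ℕ} (S : Finset (Fin (N+1))) : Set (Fin (N+1) → ℝ) :=
  {x ∈ stdSimp N | ∀ i ∉ S, x i = 0}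

/-- The `k`-skeleton `Δ_k^N` of the standard `N`-simplex. -/
def skel (N k : ℕ) : Set (Fin (N+1) → ℝ) :=
  {x ∈ stdSimp N | {i | x i ≠ 0}.ncard ≤ k + 1}

/-- A Tverberg partition for (the relevant restriction of) `f`: a set of `q`
pairwise disjoint nonempty vertex subsets whose faces have images with a common point. -/
def IsTverbergPartition (q : ℕ) {N d : ℕ}
    (f : (Fin (N+1) → ℝ) → Euc d) (P : Finset (Finset (Fin (N+1)))) : Prop :=
  P.card = q ∧ (∀ S ∈ P, S.Nonempty) ∧
  (∀ S ∈ P, ∀ T ∈ P, S ≠ T → Disjoint S T) ∧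
  (⋂ S ∈ P, f '' simpFace S).Nonempty

/-- The boundary `∂σ_S` of the face `σ_S`. -/
def simpFaceBoundary {N : ℕ} (S : Finset (Fin (N+1))) : Set (Fin (N+1) → ℝ) :=
  {x ∈ simpFace S | ∃ i ∈ S, x i = 0}

/-- `p ∈ W_{≠0}(f|_{∂σ_S})`: either `p` is in the image of the boundary, or the
corestriction of `f|_{∂σ_S}` to `ℝ^d \ {p}` is not nullhomotopic (there is no
continuous map agreeing with `f` on `∂σ_S` that is homotopic to a constant). -/
def InWne (d : ℕ) {N : ℕ} (f : (Fin (N+1) → ℝ) → Euc d)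
    (S : Finset (Fin (N+1))) (p : Euc d) : Prop :=
  p ∈ f '' simpFaceBoundary S ∨
  ¬ ∃ (g : C(↥(simpFaceBoundary S), ↥({p}ᶜ : Set (Euc d))))
      (y : ↥({p}ᶜ : Set (Euc d))),
      (∀ x : ↥(simpFaceBoundary S), (g x : Euc d) = f ↑x) ∧
      g.Homotopic (ContinuousMap.const _ y)

/-- A winding partition (in dimension `d`) for `f` defined on the `(d-1)`-skeleton:
`q` pairwise disjoint nonempty vertex subsets, each of size at most `d+1`, together
with a winding point `p`. -/
def IsWindingPartition (d q : ℕ) {N : ℕ}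
    (f : (Fin (N+1) → ℝ) → Euc d) (P : Finset (Finset (Fin (N+1)))) : Prop :=
  P.card = q ∧ (∀ S ∈ P, S.Nonempty) ∧ (∀ S ∈ P, S.card ≤ d + 1) ∧
  (∀ S ∈ P, ∀ T ∈ P, S ≠ T → Disjoint S T) ∧
  ∃ p : Euc d, ∀ S ∈ P,
    (S.card ≤ d → p ∈ f '' simpFace S) ∧
    (S.card = d + 1 → InWne d f S p)

open Set Metric Topology Filter

theorem ContinuousOn.exists_continuous_eqOn {X E : Type*} [TopologicalSpace X] [NormalSpace X]
    [NormedAddCommGroup E] [NormedSpace ℝ E] [FiniteDimensional ℝ E]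
    {s : Set X} (hs : IsClosed s) {f : X → E} (hf : ContinuousOn f s) :
    ∃ g : X → E, Continuous g ∧ EqOn g f s := by
  obtain ⟨g, hg⟩ := ContinuousMap.exists_restrict_eq hs (⟨_, hf.domRestrict⟩ : C(s, E))
  exact ⟨g, g.continuous, fun x hx => DFunLike.congr_fun hg ⟨x, hx⟩⟩

theorem ContinuousOn.exists_continuous_eqOn_norm_le {X E : Type*} [TopologicalSpace X]
    [NormalSpace X] [NormedAddCommGroup E] [NormedSpace ℝ E] [FiniteDimensional ℝ E]
    {s : Set X} (hs : IsClosed s) {f : X → E} (hf : ContinuousOn f s) {r : ℝ} (hr : 0 < r)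
    (hfr : ∀ x ∈ s, ‖f x‖ ≤ r) :
    ∃ g : X → E, Continuous g ∧ EqOn g f s ∧ ∀ x, ‖g x‖ ≤ r := by
  have := Metric.instTietzeExtensionClosedBall ℝ (0 : E) hr
  obtain ⟨g, hgr, hg⟩ := (⟨_, hf.domRestrict⟩ : C(s, E)).exists_forall_mem_restrict_eq hs
    (t := closedBall 0 r) (fun x => by simpa using hfr x x.2)
  exact ⟨g, g.continuous, fun x hx => DFunLike.congr_fun hg ⟨x, hx⟩, fun x => by simpa using hgr x⟩

/-- Homotopy extension: if `H 0` is homotopic inside the open set `U`, over the compact set `A`, to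
a map that extends to `C` inside `U`, then `H 0` extends to `C` inside `U`. -/
theorem exists_continuous_extension_of_homotopy {V E : Type*} [MetricSpace V]
    [NormedAddCommGroup E] [NormedSpace ℝ E] [FiniteDimensional ℝ E]
    {C A : Set V} (hA : IsCompact A) {U : Set E} (hU : IsOpen U)
    {K : V → E} (hK : Continuous K) (hKU : MapsTo K C U)
    {H : ℝ × V → E} (hH : ContinuousOn H (Icc 0 1 ×ˢ A)) (hHU : MapsTo H (Icc 0 1 ×ˢ A) U)
    (hHK : ∀ x ∈ A, H (1, x) = K x) :
    ∃ G : V → E, Continuous G ∧ (∀ x ∈ A, G x = H (0, x)) ∧ MapsTo G C U := by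
  have hcl : IsClosed ((Icc 0 1 : Set ℝ) ×ˢ A) := isClosed_Icc.prod hA.isClosed
  have hcont : ContinuousOn (fun z : ℝ × V => H z - K z.2) (Icc 0 1 ×ˢ A) :=
    hH.sub (hK.comp continuous_snd).continuousOn
  obtain ⟨D, hDc, hD⟩ := hcont.exists_continuous_eqOn hcl
  have hD' : ∀ t ∈ Icc (0 : ℝ) 1, ∀ x ∈ A, D (t, x) = H (t, x) - K x := fun t ht x hx =>
    hD (mk_mem_prod ht hx)
  let M : ℝ × V → E := fun z => K z.2 + (D z - D (1, z.2))
  have hM : Continuous M := by fun_prop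
  have hM1 : ∀ x, M (1, x) = K x := fun x => by simp [M]
  have hMA : ∀ t ∈ Icc (0 : ℝ) 1, ∀ x ∈ A, M (t, x) = H (t, x) := fun t ht x hx => by
    simp [M, hD' t ht x hx, hD' 1 (by simp) x hx, hHK x hx]
  obtain ⟨T, O, -, hO, hT, hAO, hTO⟩ := generalized_tube_lemma (s := Icc (0 : ℝ) 1) isCompact_Icc
    hA (hU.preimage hM) (fun z hz => by
      rw [mem_preimage, show z = (z.1, z.2) from rfl, hMA _ hz.1 _ hz.2]; exact hHU hz)
  obtain ⟨u, hu0, hu1, hu⟩ := exists_continuous_zero_one_of_isClosed hA.isClosed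
    hO.isClosed_compl (disjoint_compl_right_iff_subset.2 hAO)
  refine ⟨fun x => M (u x, x), by fun_prop, fun x hx => ?_, fun x hx => ?_⟩
  · have : u x = 0 := hu0 hx
    simp only [this]
    exact hMA 0 (by simp) x hx
  · by_cases hxO : x ∈ O
    · exact hTO (mk_mem_prod (hT (hu x)) hxO)
    · have : u x = 1 := hu1 hxO
      simp only [this, hM1]
      exact hKU hx

theorem exists_continuous_near_avoiding_finite {V W D : Type*}
    [NormedAddCommGroup V] [NormedSpace ℝ V] [FiniteDimensional ℝ V]
    [NormedAddCommGroup W] [NormedSpace ℝ W] [FiniteDimensional ℝ W]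
    [NormedAddCommGroup D] [NormedSpace ℝ D] [FiniteDimensional ℝ D]
    (hDW : Module.finrank ℝ D < Module.finrank ℝ W)
    {C A : Set V} (hA : IsCompact A) {ρ : D → V} (hρ : ContDiff ℝ 1 ρ) (hC : C ⊆ range ρ)
    {φ : V → W} (hφ : Continuous φ) {P : Set W} (hP : P.Finite) (hPA : ∀ x ∈ A, φ x ∉ P)
    {δ : ℝ} (hδ : 0 < δ) :
    ∃ φ' : V → W, Continuous φ' ∧ EqOn φ' φ A ∧ (∀ x, ‖φ' x - φ x‖ < δ) ∧
      ∀ x ∈ C, φ' x ∉ P := by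
  have hdisj : Disjoint P (φ '' A) := by
    rw [disjoint_right]
    rintro _ ⟨x, hx, rfl⟩
    exact hPA x hx
  obtain ⟨r, hr, hdisj'⟩ :=
    hdisj.exists_cthickenings hP.isCompact (hA.image hφ).isClosed
  obtain ⟨u, hu0, hu1, hu⟩ := exists_continuous_zero_one_of_isClosed hA.isClosed
    ((isClosed_cthickening (δ := r) (E := P)).preimage hφ) (by
      rw [disjoint_left]
      intro x hx hx'
      exact disjoint_left.1 hdisj' hx' (self_subset_cthickening _ ⟨x, hx, rfl⟩))
  set η := min δ r with hη
  have hη0 : 0 < η := lt_min hδ hr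
  obtain ⟨ψ, hψ, hψφ, -⟩ := hφ.exists_contDiff_approx 1 (ε := fun _ => η / 2) continuous_const
    (fun _ => by positivity)
  have hdim : dimH (⋃ p ∈ P, range fun z => p - ψ (ρ z)) < Module.finrank ℝ W := by
    rw [dimH_bUnion hP.countable]
    refine lt_of_le_of_lt (iSup₂_le fun p _ => ?_) (Nat.cast_lt.2 hDW)
    exact ContDiff.dimH_range_le (contDiff_const.sub (hψ.comp hρ))
  obtain ⟨c, hc, hcη⟩ := Metric.dense_iff.1 (dense_compl_of_dimH_lt_finrank hdim) 0 (η / 2)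
    (by positivity)
  have hnear : ∀ x, ‖ψ x + c - φ x‖ < η := fun x => by
    have h1 := hψφ x
    rw [dist_eq_norm] at h1
    have h2 : ‖c‖ < η / 2 := by simpa using hc
    calc ‖ψ x + c - φ x‖ = ‖(ψ x - φ x) + c‖ := by congr 1; abel
      _ ≤ ‖ψ x - φ x‖ + ‖c‖ := norm_add_le _ _
      _ < η := by linarith
  have hψc := hψ.continuous
  have hle : ∀ x, ‖u x • (ψ x + c - φ x)‖ < η := fun x => by
    rw [norm_smul, Real.norm_of_nonneg (hu x).1]
    exact (mul_le_of_le_one_left (norm_nonneg _) (hu x).2).trans_lt (hnear x)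
  refine ⟨fun x => φ x + u x • (ψ x + c - φ x), by fun_prop, fun x hx => ?_, fun x => ?_,
    fun x hx => ?_⟩
  · have : u x = 0 := hu0 hx
    simp [this]
  · rw [add_sub_cancel_left]
    exact (hle x).trans_le (min_le_left _ _)
  · by_cases hxB : φ x ∈ cthickening r P
    · have : u x = 1 := hu1 hxB
      simp only [this, one_smul, add_sub_cancel]
      intro hmem
      obtain ⟨z, rfl⟩ := hC hx
      refine hcη (mem_biUnion hmem ⟨z, ?_⟩)
      simp
    · intro hmem
      refine hxB (mem_cthickening_of_dist_le _ _ _ _ hmem ?_)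
      rw [dist_eq_norm, sub_add_cancel_left, norm_neg]
      exact (hle x).le.trans (min_le_right _ _)

/-- If a map on `A` has an extension to `C` missing `p` and one missing the finite set `Q`, all of
whose points lie above `p`, then it has an extension missing both. -/
theorem exists_extension_avoiding_insert {V W D : Type*}
    [NormedAddCommGroup V] [NormedSpace ℝ V] [FiniteDimensional ℝ V]
    [NormedAddCommGroup W] [NormedSpace ℝ W] [FiniteDimensional ℝ W]
    [NormedAddCommGroup D] [NormedSpace ℝ D] [FiniteDimensional ℝ D]
    (hDW : Module.finrank ℝ D < 2 * Module.finrank ℝ W)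
    {C A : Set V} (hC : IsCompact C) (hA : IsCompact A) (hAC : A ⊆ C)
    {ρ : D → V} (hρ : ContDiff ℝ 1 ρ) (hCρ : C ⊆ range ρ)
    {p : ℝ × W} {Q : Set (ℝ × W)} (hQ : Q.Finite) {c : ℝ} (hpc : p.1 < c)
    (hcQ : ∀ q ∈ Q, c < q.1) (hpQ : ∀ q ∈ Q, p.2 ≠ q.2)
    {G H : V → ℝ × W} (hG : Continuous G) (hH : Continuous H) (hGH : EqOn G H A)
    (hHp : ∀ x ∈ C, H x ≠ p) (hGQ : ∀ x ∈ C, G x ∉ Q) :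
    ∃ K : V → ℝ × W, Continuous K ∧ EqOn K G A ∧ ∀ x ∈ C, K x ∉ insert p Q := by
  -- Make the second components of `H` and `G` generic.
  obtain ⟨δ₁, hδ₁, hd₁⟩ : ∃ δ > 0, ∀ x ∈ C, ∀ w : W, ‖w‖ < δ → H x + (0, w) ≠ p := by
    have hdisj : Disjoint {p} (H '' C) := by
      rw [disjoint_singleton_left]; rintro ⟨x, hx, h⟩; exact hHp x hx h
    obtain ⟨r, hr, h⟩ := hdisj.exists_cthickenings isCompact_singleton (hC.image hH).isClosed
    refine ⟨r, hr, fun x hx w hw heq => ?_⟩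
    refine disjoint_left.1 h (self_subset_cthickening _ rfl)
      (mem_cthickening_of_dist_le _ _ _ _ ⟨x, hx, rfl⟩ ?_)
    rw [← heq, dist_eq_norm, add_sub_cancel_left, Prod.norm_mk]
    simpa using hw.le
  obtain ⟨δ₂, hδ₂, hd₂⟩ : ∃ δ > 0, ∀ x ∈ C, ∀ w : W, ‖w‖ < δ → G x + (0, w) ∉ Q := by
    have hdisj : Disjoint Q (G '' C) := by
      rw [disjoint_right]; rintro _ ⟨x, hx, rfl⟩; exact hGQ x hx
    obtain ⟨r, hr, h⟩ := hdisj.exists_cthickenings hQ.isCompact (hC.image hG).isClosed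
    refine ⟨r, hr, fun x hx w hw hmem => ?_⟩
    refine disjoint_left.1 h (self_subset_cthickening _ hmem)
      (mem_cthickening_of_dist_le _ _ _ _ ⟨x, hx, rfl⟩ ?_)
    rw [dist_eq_norm, add_sub_cancel_left, Prod.norm_mk]
    simpa using hw.le
  obtain ⟨φ, hφ, hφA, hφδ, hφP⟩ := exists_continuous_near_avoiding_finite (W := W × W)
    (by rw [Module.finrank_prod]; omega) hA hρ hCρ
    (φ := fun x => ((H x).2, (G x).2)) (by fun_prop)
    (P := (fun q : ℝ × W => (p.2, q.2)) '' Q) (hQ.image _)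
    (by
      rintro x hx ⟨q, hq, h⟩
      simp only [Prod.mk.injEq, hGH hx] at h
      exact hpQ q hq (h.1.trans h.2.symm))
    (lt_min hδ₁ hδ₂)
  have hyH : ∀ x ∈ C, (φ x).1 = p.2 → (H x).1 ≠ p.1 := fun x hx h1 h2 => by
    have := hd₁ x hx ((φ x).1 - (H x).2) (lt_of_le_of_lt (norm_fst_le (φ x - ((H x).2, (G x).2)))
      ((hφδ x).trans_le (min_le_left _ _)))
    exact this (Prod.ext (by simp [h2]) (by simp [h1]))
  have hyG : ∀ x ∈ C, ∀ q ∈ Q, (φ x).2 = q.2 → (G x).1 ≠ q.1 := fun x hx q hq h1 h2 => by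
    have := hd₂ x hx ((φ x).2 - (G x).2) (lt_of_le_of_lt (norm_snd_le (φ x - ((H x).2, (G x).2)))
      ((hφδ x).trans_le (min_le_right _ _)))
    have heq : G x + (0, (φ x).2 - (G x).2) = q := Prod.ext (by simp [h2]) (by simp [h1])
    exact this (heq ▸ hq)
  have hyA : ∀ x ∈ A, (φ x).1 = (G x).2 ∧ (φ x).2 = (G x).2 := fun x hx => by
    simp [hφA hx, hGH hx]
  -- Separate the preimages of the vertical lines.
  obtain ⟨w, hw0, hw1, hw⟩ := exists_continuous_zero_one_of_isClosed
    (s := C ∩ {x | (φ x).1 = p.2}) (t := C ∩ ⋃ q ∈ Q, {x | (φ x).2 = q.2})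
    (hC.isClosed.inter (isClosed_eq (by fun_prop) continuous_const))
    (hC.isClosed.inter (hQ.isClosed_biUnion fun q _ => isClosed_eq (by fun_prop) continuous_const))
    (by
      rw [disjoint_left]
      rintro x ⟨hx, h1⟩ ⟨-, h2⟩
      obtain ⟨q, hq, h2⟩ := mem_iUnion₂.1 h2
      exact hφP x hx ⟨q, hq, Prod.ext h1.symm h2.symm⟩)
  let m : V → ℝ := fun x => max 0 (min 1 (3 * w x - 1))
  let T : V → ℝ := fun x => c + max 0 (1 - 3 * w x) * min ((H x).1 - c) 0 +
    max 0 (3 * w x - 2) * max ((G x).1 - c) 0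
  let K₀ : V → ℝ × W := fun x => (T x, (1 - m x) • (φ x).1 + m x • (φ x).2)
  have hK₀ : Continuous K₀ := by
    simp only [K₀, m, T]; fun_prop
  have hlow : ∀ x, T x < c → w x < 1 / 3 := fun x hx => by
    by_contra! hcon
    simp only [T] at hx
    rw [max_eq_left (by linarith : 1 - 3 * w x ≤ 0), zero_mul] at hx
    nlinarith [mul_nonneg (le_max_left 0 (3 * w x - 2)) (le_max_right ((G x).1 - c) 0)]
  have hhigh : ∀ x, c < T x → 2 / 3 < w x := fun x hx => by
    by_contra! hcon
    simp only [T] at hx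
    rw [max_eq_left (by linarith : 3 * w x - 2 ≤ 0), zero_mul] at hx
    nlinarith [mul_nonneg (le_max_left 0 (1 - 3 * w x)) (neg_nonneg.2 (min_le_right ((H x).1 - c) 0))]
  have hT0 : ∀ x, w x = 0 → T x = c + min ((H x).1 - c) 0 := fun x hx => by
    simp only [T, hx]; norm_num
  have hT1 : ∀ x, w x = 1 → T x = c + max ((G x).1 - c) 0 := fun x hx => by
    simp only [T, hx]; norm_num
  have hKp : ∀ x ∈ C, K₀ x ≠ p := fun x hx heq => by
    have h1 : T x = p.1 := congrArg Prod.fst heq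
    have h2 : (1 - m x) • (φ x).1 + m x • (φ x).2 = p.2 := congrArg Prod.snd heq
    have hw3 := hlow x (h1 ▸ hpc)
    have hm : m x = 0 := max_eq_left ((min_le_right _ _).trans (by linarith))
    have h3 : (φ x).1 = p.2 := by simpa [hm] using h2
    have h4 := hT0 x (hw0 ⟨hx, h3⟩)
    rcases le_total ((H x).1 - c) 0 with h | h
    · rw [min_eq_left h] at h4; exact hyH x hx h3 (by linarith)
    · rw [min_eq_right h] at h4; linarith
  have hKq : ∀ x ∈ C, K₀ x ∉ Q := fun x hx hq => by
    have hw3 := hhigh x (hcQ _ hq)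
    have hm : m x = 1 := by
      simp only [m]; rw [min_eq_left (by linarith)]; norm_num
    have h3 : (φ x).2 = (K₀ x).2 := by simp [K₀, hm]
    have h4 := hT1 x (hw1 ⟨hx, mem_biUnion hq h3⟩)
    have h5 := hyG x hx _ hq h3
    have h6 : (K₀ x).1 = T x := rfl
    have h7 := hcQ _ hq
    rcases le_total ((G x).1 - c) 0 with h | h
    · rw [max_eq_right h] at h4; linarith
    · rw [max_eq_left h] at h4; exact h5 (by linarith)
  have hKA : ∀ x ∈ A, K₀ x = (T x, (G x).2) := fun x hx => by
    simp only [K₀, hyA x hx, ← add_smul]; simp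
  -- Slide the boundary values vertically back to those of `G`.
  obtain ⟨K, hK, hKG, hKU⟩ := exists_continuous_extension_of_homotopy (C := C) hA
    (U := (insert p Q)ᶜ) (hQ.insert p).isClosed.isOpen_compl hK₀
    (by
      rintro x hx (h | h)
      exacts [hKp x hx h, hKq x hx h])
    (H := fun z => ((1 - z.1) * (G z.2).1 + z.1 * T z.2, (G z.2).2))
    (by
      have hT : Continuous T := continuous_fst.comp hK₀
      exact Continuous.continuousOn (by fun_prop))
    (by
      rintro ⟨s, x⟩ ⟨⟨hs0 : 0 ≤ s, hs1 : s ≤ 1⟩, hx : x ∈ A⟩ h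
      have hxC := hAC hx
      have hy := hyA x hx
      rcases h with h | h
      · have h1 : (1 - s) * (G x).1 + s * T x = p.1 := congrArg Prod.fst h
        have h2 : (G x).2 = p.2 := (congrArg Prod.snd h :)
        have h3 : (φ x).1 = p.2 := hy.1.trans h2
        have h4 := hT0 x (hw0 ⟨hxC, h3⟩)
        have h5 := hyH x hxC h3
        rw [← hGH hx] at h4 h5
        rcases le_total ((G x).1 - c) 0 with h | h
        · rw [min_eq_left h] at h4; rw [h4] at h1; exact h5 (by linarith)
        · rw [min_eq_right h] at h4; rw [h4] at h1; nlinarith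
      · set q : ℝ × W := ((1 - s) * (G x).1 + s * T x, (G x).2) with hq
        have h3 : (φ x).2 = q.2 := hy.2
        have h4 := hT1 x (hw1 ⟨hxC, mem_biUnion h h3⟩)
        have h5 := hyG x hxC q h h3
        have h6 := hcQ q h
        simp only [hq] at h5 h6
        rcases le_total ((G x).1 - c) 0 with h | h
        · rw [max_eq_right h] at h4; rw [h4] at h6; nlinarith
        · rw [max_eq_left h] at h4; rw [h4] at h5; exact h5 (by linarith))
    (fun x hx => by simp [hKA x hx])
  exact ⟨K, hK, fun x hx => by rw [hKG x hx]; simp, hKU⟩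

theorem exists_continuousLinearEquiv_prod_injOn {E : Type*} [NormedAddCommGroup E]
    [InnerProductSpace ℝ E] [FiniteDimensional ℝ E] (hE : 2 ≤ Module.finrank ℝ E)
    {Q : Set E} (hQ : Q.Finite) :
    ∃ (W : Submodule ℝ E) (Θ : E ≃L[ℝ] ℝ × W), Module.finrank ℝ W + 1 = Module.finrank ℝ E ∧
      InjOn (fun x => (Θ x).1) Q ∧ InjOn (fun x => (Θ x).2) Q := by
  classical
  let R : Set E := (fun z : E × E => z.1 - z.2) '' Q.offDiag
  have hR : R.Finite := hQ.offDiag.image _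
  have hR0 : ∀ v ∈ R, v ≠ 0 := by
    rintro _ ⟨z, hz, rfl⟩
    exact sub_ne_zero.2 hz.2.2
  let s : Finset (Submodule ℝ E) :=
    hR.toFinset.image (fun v => ℝ ∙ v) ∪ hR.toFinset.image (fun v => (ℝ ∙ v)ᗮ) ∪ {⊥}
  have hs : ⊤ ∉ s := by
    intro h
    simp only [s, Finset.mem_union, Finset.mem_image, Set.Finite.mem_toFinset,
      Finset.mem_singleton] at h
    rcases h with (⟨v, hv, h⟩ | ⟨v, hv, h⟩) | h
    · have h1 := finrank_span_singleton (K := ℝ) (hR0 v hv)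
      rw [h, finrank_top] at h1
      omega
    · rw [Submodule.orthogonal_eq_top_iff, Submodule.span_singleton_eq_bot] at h
      exact hR0 v hv h
    · have h1 := finrank_top ℝ E
      rw [h, finrank_bot] at h1
      omega
  obtain ⟨e, he⟩ := (ne_univ_iff_exists_notMem _).1 (Subspace.biUnion_ne_univ_of_top_notMem hs)
  have he' : ∀ M ∈ s, e ∉ M := fun M hM h => he (mem_biUnion hM h)
  have he0 : e ≠ 0 := fun h => he' ⊥ (by simp [s]) (by simp [h])
  have hspan : ∀ v ∈ R, e ∉ ℝ ∙ v := fun v hv => he' _ (by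
    simp only [s, Finset.mem_union, Finset.mem_image, Set.Finite.mem_toFinset]
    exact .inl (.inl ⟨v, hv, rfl⟩))
  have horth : ∀ v ∈ R, inner ℝ e v ≠ 0 := fun v hv h => he' (ℝ ∙ v)ᗮ (by
    simp only [s, Finset.mem_union, Finset.mem_image, Set.Finite.mem_toFinset]
    exact .inl (.inr ⟨v, hv, rfl⟩)) (by
      rw [Submodule.mem_orthogonal_singleton_iff_inner_left]; exact h)
  let W : Submodule ℝ E := (ℝ ∙ e)ᗮ
  have hW : Module.finrank ℝ W + 1 = Module.finrank ℝ E := by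
    have h1 := Submodule.finrank_add_finrank_orthogonal (ℝ ∙ e)
    rw [finrank_span_singleton he0] at h1
    rw [← h1, add_comm]
  have hproj : ∀ x, W.orthogonalProjectionOnto x = 0 → x ∈ ℝ ∙ e := fun x hx => by
    rw [Submodule.orthogonalProjectionOnto_eq_zero_iff] at hx
    rwa [Submodule.orthogonal_orthogonal] at hx
  let θ : E →ₗ[ℝ] ℝ × W :=
    ((innerSL ℝ e).prod W.orthogonalProjectionOnto : E →L[ℝ] ℝ × W)
  have hθ : Function.Injective θ := by
    rw [← LinearMap.ker_eq_bot, LinearMap.ker_eq_bot']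
    intro x hx
    obtain ⟨a, rfl⟩ := Submodule.mem_span_singleton.1 (hproj x (congrArg Prod.snd hx))
    have h1 : inner ℝ e (a • e) = 0 := congrArg Prod.fst hx
    rw [inner_smul_right, mul_eq_zero, inner_self_eq_zero] at h1
    simp [h1.resolve_right he0]
  let Θ : E ≃ₗ[ℝ] ℝ × W := LinearEquiv.ofInjectiveOfFinrankEq θ hθ (by
    rw [Module.finrank_prod, Module.finrank_self]; omega)
  have hΘ : ∀ x, Θ x = (inner ℝ e x, W.orthogonalProjectionOnto x) := fun x => rfl
  have hmem : ∀ x ∈ Q, ∀ y ∈ Q, x ≠ y → x - y ∈ R := fun x hx y hy hxy =>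
    ⟨(x, y), ⟨hx, hy, hxy⟩, rfl⟩
  refine ⟨W, Θ.toContinuousLinearEquiv, hW, fun x hx y hy hxy => ?_, fun x hx y hy hxy => ?_⟩
  · by_contra hne
    refine horth _ (hmem x hx y hy hne) ?_
    rw [inner_sub_right, sub_eq_zero]
    exact hxy
  · by_contra hne
    have h1 : W.orthogonalProjectionOnto (x - y) = 0 := by
      rw [map_sub, sub_eq_zero]; exact hxy
    obtain ⟨a, ha⟩ := Submodule.mem_span_singleton.1 (hproj _ h1)
    have ha0 : a ≠ 0 := by
      rintro rfl
      exact hne (sub_eq_zero.1 (by simpa using ha.symm))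
    refine hspan _ (hmem x hx y hy hne) (Submodule.mem_span_singleton.2 ⟨a⁻¹, ?_⟩)
    rw [← ha, smul_smul, inv_mul_cancel₀ ha0, one_smul]

/-- In dimension at least three, a map that for each point of a finite set has an extension
missing that point has an extension missing all of them. -/
theorem exists_extension_avoiding_finite {V E D : Type*}
    [NormedAddCommGroup V] [NormedSpace ℝ V] [FiniteDimensional ℝ V]
    [NormedAddCommGroup E] [InnerProductSpace ℝ E] [FiniteDimensional ℝ E]
    [NormedAddCommGroup D] [NormedSpace ℝ D] [FiniteDimensional ℝ D]
    (hE : 3 ≤ Module.finrank ℝ E) (hDE : Module.finrank ℝ D = Module.finrank ℝ E)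
    {C A : Set V} (hC : IsCompact C) (hA : IsCompact A) (hAC : A ⊆ C)
    {ρ : D → V} (hρ : ContDiff ℝ 1 ρ) (hCρ : C ⊆ range ρ)
    {g : V → E} (hg : Continuous g) (Q : Finset E)
    (h : ∀ p ∈ Q, ∃ G : V → E, Continuous G ∧ EqOn G g A ∧ ∀ x ∈ C, G x ≠ p) :
    ∃ G : V → E, Continuous G ∧ EqOn G g A ∧ ∀ x ∈ C, G x ∉ Q := by
  classical
  induction hn : Q.card generalizing Q with
  | zero =>
    obtain rfl := Finset.card_eq_zero.1 hn
    exact ⟨g, hg, fun _ _ => rfl, by simp⟩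
  | succ n ih =>
    obtain ⟨W, Θ, hW, hΘ1, hΘ2⟩ := exists_continuousLinearEquiv_prod_injOn (by omega)
      Q.finite_toSet
    have hne : Q.Nonempty := Finset.card_pos.1 (by omega)
    obtain ⟨p, hp, hmin⟩ := Q.exists_min_image (fun x => (Θ x).1) hne
    have hlt : ∀ q ∈ Q.erase p, (Θ p).1 < (Θ q).1 := fun q hq => by
      rw [Finset.mem_erase] at hq
      exact lt_of_le_of_ne (hmin q hq.2) fun heq => hq.1 (hΘ1 hq.2 hp heq.symm)
    obtain ⟨c, hpc, hcQ⟩ : ∃ c, (Θ p).1 < c ∧ ∀ q ∈ Q.erase p, c < (Θ q).1 := by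
      rcases (Q.erase p).eq_empty_or_nonempty with h0 | h0
      · exact ⟨(Θ p).1 + 1, by linarith, by simp [h0]⟩
      · obtain ⟨q, hq, hqmin⟩ := (Q.erase p).exists_min_image (fun x => (Θ x).1) h0
        obtain ⟨c, hc1, hc2⟩ := exists_between (hlt q hq)
        exact ⟨c, hc1, fun r hr => hc2.trans_le (hqmin r hr)⟩
    obtain ⟨G, hG, hGg, hGQ⟩ := ih (Q.erase p)
      (fun q hq => h q (Finset.mem_of_mem_erase hq)) (by rw [Finset.card_erase_of_mem hp]; omega)
    obtain ⟨H, hH, hHg, hHp⟩ := h p hp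
    obtain ⟨K, hK, hKG, hKQ⟩ := exists_extension_avoiding_insert (by omega) hC hA hAC hρ hCρ
      (p := Θ p) (Q := Θ '' (Q.erase p : Finset E)) ((Finset.finite_toSet _).image _) hpc
      (by rintro _ ⟨q, hq, rfl⟩; exact hcQ q hq)
      (by
        rintro _ ⟨q, hq, rfl⟩ heq
        rw [Finset.mem_coe, Finset.mem_erase] at hq
        exact hq.1 (hΘ2 hq.2 hp heq.symm))
      (G := fun x => Θ (G x)) (H := fun x => Θ (H x)) (by fun_prop) (by fun_prop)
      (fun x hx => by simp only [hGg hx, hHg hx])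
      (fun x hx heq => hHp x hx (Θ.injective heq))
      (by
        rintro x hx ⟨q, hq, heq⟩
        exact hGQ x hx (Θ.injective heq ▸ hq))
    refine ⟨fun x => Θ.symm (K x), by fun_prop, fun x hx => ?_, fun x hx hmem => hKQ x hx ?_⟩
    · simp only [hKG hx, ContinuousLinearEquiv.symm_apply_apply, hGg hx]
    · rw [← image_insert_eq, ← Finset.coe_insert, Finset.insert_erase hp]
      exact ⟨_, hmem, by simp⟩

theorem ContDiff.dense_regular_values {D T : Type*}
    [NormedAddCommGroup D] [NormedSpace ℝ D] [FiniteDimensional ℝ D]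
    [NormedAddCommGroup T] [NormedSpace ℝ T] [FiniteDimensional ℝ T]
    {Ψ : D → T} (hΨ : ContDiff ℝ 1 Ψ) (hDT : Module.finrank ℝ D ≤ Module.finrank ℝ T) :
    Dense {y | ∀ x, Ψ x = y →
      Function.Injective (fderiv ℝ Ψ x) ∧ Module.finrank ℝ D = Module.finrank ℝ T} := by
  rcases hDT.lt_or_eq with hlt | heq
  · exact (hΨ.dense_compl_range_of_finrank_lt_finrank hlt).mono
      fun y hy x hx => (hy ⟨x, hx⟩).elim
  let e : T ≃L[ℝ] D := ContinuousLinearEquiv.ofFinrankEq heq.symm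
  let _ : MeasurableSpace D := borel D
  have : BorelSpace D := ⟨rfl⟩
  let f' : D → D →L[ℝ] D := fun x => (e : T →L[ℝ] D).comp (fderiv ℝ Ψ x)
  have hf : ∀ x, HasFDerivAt (fun x => e (Ψ x)) (f' x) x := fun x =>
    e.hasFDerivAt.comp x (hΨ.differentiable one_ne_zero x).hasFDerivAt
  have hnull := MeasureTheory.addHaar_image_eq_zero_of_det_fderivWithin_eq_zero
    MeasureTheory.Measure.addHaar (s := {x | (f' x).det = 0})
    (fun x _ => (hf x).hasFDerivWithinAt) (fun x hx => hx)
  have hdense : Dense ((fun x => e (Ψ x)) '' {x | (f' x).det = 0})ᶜ :=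
    MeasureTheory.Measure.dense_of_ae (MeasureTheory.measure_eq_zero_iff_ae_notMem.1 hnull)
  refine (hdense.preimage e.toHomeomorph.isOpenMap).mono fun y hy x hx => ⟨?_, heq⟩
  have hdet : (f' x).det ≠ 0 := fun h => hy ⟨x, h, by simp [hx]⟩
  have hinj : Function.Injective (f' x) := by
    have := ((f' x : D →ₗ[ℝ] D).isUnit_iff_isUnit_det).2 (isUnit_iff_ne_zero.2 hdet)
    exact ((Module.End.isUnit_iff _).1 this).injective
  exact fun u v huv => hinj (by simp [f', huv])

/-- Generic linear perturbations of `F` put the images of independent pieces in general position. -/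
theorem isOpen_dense_general_position {ι V E : Type*} [Fintype ι] [Nonempty ι]
    [NormedAddCommGroup V] [NormedSpace ℝ V] [FiniteDimensional ℝ V]
    [NormedAddCommGroup E] [NormedSpace ℝ E] [FiniteDimensional ℝ E]
    {D : ι → Type*} [∀ i, NormedAddCommGroup (D i)] [∀ i, NormedSpace ℝ (D i)]
    [∀ i, FiniteDimensional ℝ (D i)]
    {F : V → E} (hF : ContDiff ℝ 1 F) {ρ : ∀ i, D i → V} (hρ : ∀ i, ContDiff ℝ 1 (ρ i))
    {K : ∀ i, Set (D i)} (hK : ∀ i, IsCompact (K i))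
    {ℓ : ι → V →L[ℝ] ℝ} (hℓ : ∀ i z, ℓ i (ρ i z) = 1) (hℓ' : ∀ i j z, i ≠ j → ℓ i (ρ j z) = 0)
    (hdim : ∑ i, Module.finrank ℝ (D i) + Module.finrank ℝ E ≤
      Fintype.card ι * Module.finrank ℝ E) :
    ∃ O : Set (V →L[ℝ] E), IsOpen O ∧ Dense O ∧ ∀ a ∈ O,
      {p | ∀ i, ∃ z ∈ K i, F (ρ i z) + a (ρ i z) = p}.Finite ∧
      (∑ i, Module.finrank ℝ (D i) + Module.finrank ℝ E < Fintype.card ι * Module.finrank ℝ E →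
        {p | ∀ i, ∃ z ∈ K i, F (ρ i z) + a (ρ i z) = p} = ∅) := by
  classical
  obtain ⟨i₀⟩ := ‹Nonempty ι›
  let Ψ : (V →L[ℝ] E) → (∀ i, D i) × E → ι → E := fun a x i =>
    F (ρ i (x.1 i)) + a (ρ i (x.1 i)) - x.2
  have hdim1 : Module.finrank ℝ ((∀ i, D i) × E) =
      ∑ i, Module.finrank ℝ (D i) + Module.finrank ℝ E := by
    rw [Module.finrank_prod, Module.finrank_pi_fintype]
  have hdim2 : Module.finrank ℝ (ι → E) = Fintype.card ι * Module.finrank ℝ E := by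
    rw [Module.finrank_pi_fintype]; simp
  have hΨ : ContDiff ℝ 1 (Function.uncurry Ψ) := by
    refine contDiff_pi.2 fun i => ?_
    have h1 : ContDiff ℝ 1 fun x : (V →L[ℝ] E) × ((∀ i, D i) × E) => ρ i (x.2.1 i) :=
      (hρ i).comp (contDiff_pi.1 (contDiff_fst.comp contDiff_snd) i)
    exact ((hF.comp h1).add (contDiff_fst.clm_apply h1)).sub (contDiff_snd.comp contDiff_snd)
  have hΨa : ∀ a, ContDiff ℝ 1 (Ψ a) := fun a => hΨ.comp (contDiff_prodMk_right a)
  let good : Set ((∀ i, D i) × E →L[ℝ] ι → E) :=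
    {L | Function.Injective L ∧ Module.finrank ℝ ((∀ i, D i) × E) = Module.finrank ℝ (ι → E)}
  have hgood : IsOpen good := by
    by_cases h : Module.finrank ℝ ((∀ i, D i) × E) = Module.finrank ℝ (ι → E)
    · simpa [good, h] using ContinuousLinearMap.isOpen_injective
    · simp only [good, h, and_false, ofPred_false, isOpen_empty]
  let pt : (V →L[ℝ] E) → (∀ i, D i) → (∀ i, D i) × E := fun a z =>
    (z, F (ρ i₀ (z i₀)) + a (ρ i₀ (z i₀)))
  have hpt : Continuous (Function.uncurry pt) := by
    have h1 := hF.continuous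
    have h2 := (hρ i₀).continuous
    simp only [pt, Function.uncurry_def]
    fun_prop
  have hpt' : ∀ a x, Ψ a x = 0 → x = pt a x.1 := fun a x hx => by
    have : F (ρ i₀ (x.1 i₀)) + a (ρ i₀ (x.1 i₀)) - x.2 = 0 := congrFun hx i₀
    exact Prod.ext rfl (sub_eq_zero.1 this).symm
  have hKc : IsCompact (univ.pi K) := isCompact_univ_pi hK
  let B : Set (V →L[ℝ] E) := {a | ∃ z ∈ univ.pi K, Ψ a (pt a z) = 0 ∧
    fderiv ℝ (Ψ a) (pt a z) ∉ good}
  have hB : IsClosed B := by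
    have : CompactSpace (univ.pi K) := isCompact_iff_compactSpace.1 hKc
    have hcl : IsClosed {x : (V →L[ℝ] E) × univ.pi K | Ψ x.1 (pt x.1 x.2) = 0 ∧
        fderiv ℝ (Ψ x.1) (pt x.1 x.2) ∉ good} := by
      have hp : Continuous fun x : (V →L[ℝ] E) × univ.pi K => (x.1, pt x.1 x.2) :=
        continuous_fst.prodMk (hpt.comp (continuous_fst.prodMk
          (continuous_subtype_val.comp continuous_snd)))
      have hd : Continuous fun x : (V →L[ℝ] E) × ((∀ i, D i) × E) => fderiv ℝ (Ψ x.1) x.2 :=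
        contDiff_zero.1 (ContDiff.fderiv (n := 0) (m := 1)
          (f := fun (x : (V →L[ℝ] E) × ((∀ i, D i) × E)) y => Ψ x.1 y)
          (hΨ.comp ((contDiff_fst.comp contDiff_fst).prodMk contDiff_snd))
          contDiff_snd (by simp))
      exact (isClosed_eq (hΨ.continuous.comp hp) continuous_const).inter
        (hgood.isClosed_compl.preimage (hd.comp hp))
    convert isClosedMap_fst_of_compactSpace _ hcl using 1
    ext a
    constructor
    · rintro ⟨z, hz, h⟩
      exact ⟨(a, ⟨z, hz⟩), h, rfl⟩
    · rintro ⟨x, h, rfl⟩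
      exact ⟨x.2, x.2.2, h⟩
  refine ⟨Bᶜ, hB.isOpen_compl, fun a₀ => ?_, fun a ha => ?_⟩
  · let β : (ι → E) → V →L[ℝ] E := fun b => a₀ + ∑ i, (ℓ i).smulRight (b i)
    have hβ : Continuous β := by
      have h1 : ∀ i, Continuous fun b : ι → E => (ℓ i).smulRight (b i) := fun i =>
        ((ContinuousLinearMap.smulRightL ℝ V E (ℓ i)).continuous).comp (continuous_apply i)
      exact continuous_const.add (continuous_finsetSum _ fun i _ => h1 i)
    have hβΨ : ∀ b, Ψ (β b) = fun x => Ψ a₀ x + b := fun b => by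
      funext x i
      have : ∑ j, ℓ j (ρ i (x.1 i)) • b j = b i := by
        rw [Finset.sum_eq_single i (fun j _ hj => by rw [hℓ' j i _ hj, zero_smul]) (by simp),
          hℓ, one_smul]
      simp only [Ψ, β, add_apply, sum_apply,
        ContinuousLinearMap.smulRight_apply, Pi.add_apply, this]
      abel
    have hdense := ((hΨa a₀).dense_regular_values (by rw [hdim1, hdim2]; exact hdim)).preimage
      (Homeomorph.neg (ι → E)).isOpenMap
    have h0 : β 0 = a₀ := by simp [β]
    rw [← h0]
    refine map_mem_closure hβ (hdense 0) fun b hb => ?_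
    rintro ⟨z, hz, h1, h2⟩
    rw [hβΨ, fderiv_add_const] at h2
    rw [hβΨ] at h1
    exact h2 (hb _ (eq_neg_of_add_eq_zero_left h1))
  · have hgoodx : ∀ x : (∀ i, D i) × E, x.1 ∈ univ.pi K → Ψ a x = 0 →
        fderiv ℝ (Ψ a) x ∈ good := fun x hx h0 => by
      by_contra hcon
      have hxe := hpt' a x h0
      exact ha ⟨x.1, hx, hxe ▸ h0, hxe ▸ hcon⟩
    let Z : Set ((∀ i, D i) × E) := {x | x.1 ∈ univ.pi K ∧ Ψ a x = 0}
    have hsub : {p | ∀ i, ∃ z ∈ K i, F (ρ i z) + a (ρ i z) = p} ⊆ Prod.snd '' Z := by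
      intro p hp
      choose z hz hzp using hp
      exact ⟨(z, p), ⟨fun i _ => hz i, funext fun i => sub_eq_zero.2 (hzp i)⟩, rfl⟩
    have hpta : Continuous (pt a) := hpt.comp (Continuous.prodMk_right a)
    have hcpt : IsCompact (pt a '' univ.pi K) := hKc.image hpta
    have hfin : Z.Finite := by
      by_contra hinf
      obtain ⟨x, -, hx⟩ := Set.Infinite.exists_accPt_of_subset_isCompact hinf hcpt
        (fun x hx => ⟨x.1, hx.1, (hpt' a x hx.2).symm⟩)
      have hZc : IsClosed Z := (hKc.isClosed.preimage continuous_fst).inter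
        (isClosed_eq (hΨa a).continuous continuous_const)
      have hxZ : x ∈ Z := hZc.closure_eq ▸ hx.clusterPt.mem_closure
      have hinj := (hgoodx x hxZ.1 hxZ.2).1
      have hanti : ∃ C, AntilipschitzWith C (fderiv ℝ (Ψ a) x) := by
        obtain ⟨C, -, hC⟩ := (fderiv ℝ (Ψ a) x).toLinearMap.exists_antilipschitzWith
          (LinearMap.ker_eq_bot.2 hinj)
        exact ⟨C, hC⟩
      rw [accPt_iff_frequently_nhdsNE] at hx
      exact hx (((((hΨa a).differentiable one_ne_zero x).hasFDerivAt).eventually_ne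
        (c := 0) hanti).mono fun y hy hyZ => hy hyZ.2)
    refine ⟨(hfin.image _).subset hsub, fun hlt => ?_⟩
    rw [← subset_empty_iff]
    intro p hp
    obtain ⟨x, hx, -⟩ := hsub hp
    have := (hgoodx x hx.1 hx.2).2
    omega

section Faces

variable {N : ℕ}

theorem isCompact_stdSimp (N : ℕ) : IsCompact (stdSimp N) :=
  isCompact_stdSimplex ℝ (Fin (N + 1))

theorem simpFaceBoundary_subset (S : Finset (Fin (N + 1))) : simpFaceBoundary S ⊆ simpFace S :=
  fun _ hx => hx.1

theorem isCompact_simpFace (S : Finset (Fin (N + 1))) : IsCompact (simpFace S) := by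
  have : simpFace S = stdSimp N ∩ ⋂ i ∉ S, {x | x i = 0} := by
    ext x; simp [simpFace]
  rw [this]
  exact (isCompact_stdSimp N).inter_right
    (isClosed_biInter fun i _ => isClosed_eq (continuous_apply i) continuous_const)

theorem isCompact_simpFaceBoundary (S : Finset (Fin (N + 1))) :
    IsCompact (simpFaceBoundary S) := by
  have : simpFaceBoundary S = simpFace S ∩ ⋃ i ∈ S, {x | x i = 0} := by
    ext x; simp [simpFaceBoundary]
  rw [this]
  exact (isCompact_simpFace S).inter_right
    (S.finite_toSet.isClosed_biUnion fun i _ =>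
      isClosed_eq (continuous_apply i) continuous_const)

theorem convex_simpFace (S : Finset (Fin (N + 1))) : Convex ℝ (simpFace S) := by
  rintro x ⟨hx, hx'⟩ y ⟨hy, hy'⟩ a b ha hb hab
  exact ⟨convex_stdSimplex ℝ (Fin (N + 1)) hx hy ha hb hab, fun i hi => by
    simp [hx' i hi, hy' i hi]⟩

theorem simpFace_nonempty {S : Finset (Fin (N + 1))} (hS : S.Nonempty) :
    (simpFace S).Nonempty := by
  obtain ⟨v, hv⟩ := hS
  refine ⟨Pi.single v 1, single_mem_stdSimplex ℝ v, fun i hi => ?_⟩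
  exact Pi.single_eq_of_ne (fun h : i = v => hi (h ▸ hv)) _

theorem sum_eq_one_of_mem_simpFace {S : Finset (Fin (N + 1))} {x : Fin (N + 1) → ℝ}
    (hx : x ∈ simpFace S) : ∑ i ∈ S, x i = 1 := by
  rw [← hx.1.2]
  exact Finset.sum_subset (Finset.subset_univ S) fun i _ hi => hx.2 i hi

theorem skel_eq_biUnion (N k : ℕ) :
    skel N k = ⋃ S ∈ {S : Finset (Fin (N + 1)) | S.card ≤ k + 1}, simpFace S := by
  ext x
  simp only [skel, mem_ofPred_eq, mem_iUnion, exists_prop]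
  constructor
  · rintro ⟨hx, hk⟩
    refine ⟨Finset.univ.filter fun i => x i ≠ 0, ?_, hx, fun i hi => by simpa using hi⟩
    rwa [← Set.ncard_coe_finset, Finset.coe_filter_univ]
  · rintro ⟨S, hS, hx⟩
    refine ⟨hx.1, le_trans ?_ hS⟩
    rw [← Set.ncard_coe_finset S]
    exact Set.ncard_le_ncard (fun i hi => by_contra fun h => hi (hx.2 i h)) S.finite_toSet

theorem isCompact_skel (N k : ℕ) : IsCompact (skel N k) := by
  rw [skel_eq_biUnion]
  exact (Set.toFinite _).isCompact_biUnion fun S _ => isCompact_simpFace S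

theorem simpFace_subset_skel {S : Finset (Fin (N + 1))} {k : ℕ} (hS : S.card ≤ k + 1) :
    simpFace S ⊆ skel N k := by
  rw [skel_eq_biUnion]
  exact subset_biUnion_of_mem (u := simpFace) hS

theorem simpFaceBoundary_subset_skel {S : Finset (Fin (N + 1))} {k : ℕ} (hS : S.card = k + 2) :
    simpFaceBoundary S ⊆ skel N k := by
  classical
  rintro x ⟨hx, i, hi, hxi⟩
  refine simpFace_subset_skel (S := S.erase i) (by rw [Finset.card_erase_of_mem hi]; omega)
    ⟨hx.1, fun j hj => ?_⟩
  rcases eq_or_ne j i with rfl | hji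
  · exact hxi
  · exact hx.2 j fun h => hj (Finset.mem_erase.2 ⟨hji, h⟩)

/-- The affine chart of the plane spanned by the face `σ_S` that forgets the coordinate of the
vertex `v`. -/
def faceChart (S : Finset (Fin (N + 1))) (v : Fin (N + 1)) (z : ↥(S.erase v) → ℝ) :
    Fin (N + 1) → ℝ :=
  fun w => if h : w ∈ S.erase v then z ⟨w, h⟩ else if w = v then 1 - ∑ u, z u else 0

theorem contDiff_faceChart (S : Finset (Fin (N + 1))) (v : Fin (N + 1)) :
    ContDiff ℝ 1 (faceChart S v) := by
  refine contDiff_pi.2 fun w => ?_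
  unfold faceChart
  split_ifs
  · exact contDiff_apply ℝ ℝ _
  · exact contDiff_const.sub (ContDiff.sum fun u _ => contDiff_apply ℝ ℝ u)
  · exact contDiff_const

theorem sum_faceChart {S : Finset (Fin (N + 1))} {v : Fin (N + 1)} (hv : v ∈ S)
    (z : ↥(S.erase v) → ℝ) : ∑ w ∈ S, faceChart S v z w = 1 := by
  rw [← Finset.add_sum_erase S _ hv, ← Finset.sum_coe_sort (S.erase v)]
  have h : ∀ u : ↥(S.erase v), faceChart S v z u = z u := fun u => by
    rw [faceChart, dif_pos u.2]
  rw [Finset.sum_congr rfl fun u _ => h u]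
  simp [faceChart]

theorem faceChart_of_notMem {S : Finset (Fin (N + 1))} {v : Fin (N + 1)} (hv : v ∈ S)
    (z : ↥(S.erase v) → ℝ) {w : Fin (N + 1)} (hw : w ∉ S) : faceChart S v z w = 0 := by
  have h : w ≠ v := fun h => hw (h ▸ hv)
  simp [faceChart, hw, h]

theorem faceChart_restrict {S : Finset (Fin (N + 1))} {v : Fin (N + 1)} (hv : v ∈ S)
    {x : Fin (N + 1) → ℝ} (hx : x ∈ simpFace S) : faceChart S v (fun u => x u) = x := by
  funext w
  unfold faceChart
  split_ifs with h1 h2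
  · rfl
  · have := sum_eq_one_of_mem_simpFace hx
    rw [← Finset.add_sum_erase S _ hv, ← Finset.sum_coe_sort (S.erase v)] at this
    rw [h2]; linarith
  · refine (hx.2 w fun h => h1 (Finset.mem_erase.2 ⟨h2, h⟩)).symm

theorem simpFace_subset_range_faceChart {S : Finset (Fin (N + 1))} {v : Fin (N + 1)}
    (hv : v ∈ S) : simpFace S ⊆ range (faceChart S v) :=
  fun _ hx => ⟨_, faceChart_restrict hv hx⟩

end Faces

/-- `p ∈ W_{≠0}(f)` if and only if every extension of `f` from `∂σ_S` to `σ_S` hits `p`. -/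
theorem inWne_iff {d N : ℕ} {f : (Fin (N + 1) → ℝ) → Euc d} {S : Finset (Fin (N + 1))}
    (hS : S.Nonempty) {p : Euc d} :
    InWne d f S p ↔ ∀ G : (Fin (N + 1) → ℝ) → Euc d, Continuous G →
      EqOn G f (simpFaceBoundary S) → p ∈ G '' simpFace S := by
  constructor
  · intro h G hG hGf
    by_contra hp
    have hGp : ∀ x ∈ simpFace S, G x ∈ ({p}ᶜ : Set (Euc d)) := fun x hx h' => hp ⟨x, hx, h'⟩
    rcases h with ⟨x, hx, hxp⟩ | h
    · exact hp ⟨x, hx.1, (hGf hx).trans hxp⟩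
    obtain ⟨x₀, hx₀⟩ := simpFace_nonempty hS
    have hmem : ∀ (t : unitInterval) (x : simpFaceBoundary S),
        (1 - (t : ℝ)) • (x : Fin (N + 1) → ℝ) + (t : ℝ) • x₀ ∈ simpFace S := fun t x =>
      convex_simpFace S x.2.1 hx₀ (sub_nonneg.2 t.2.2) t.2.1 (by ring)
    refine h ⟨⟨fun x => ⟨G x, hGp x x.2.1⟩, by fun_prop⟩, ⟨G x₀, hGp x₀ hx₀⟩,
      fun x => hGf x.2, ⟨⟨⟨fun z => ⟨G ((1 - (z.1 : ℝ)) • (z.2 : Fin (N + 1) → ℝ) +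
        (z.1 : ℝ) • x₀), hGp _ (hmem z.1 z.2)⟩, by fun_prop⟩, fun x => ?_, fun x => ?_⟩⟩⟩
    · ext1; simp
    · ext1; simp
  · intro h
    refine or_iff_not_imp_left.2 fun _ => ?_
    rintro ⟨g, y, hgf, ⟨H⟩⟩
    classical
    let H' : ℝ × (Fin (N + 1) → ℝ) → Euc d := fun z =>
      if hz : z.2 ∈ simpFaceBoundary S then
        (H (Set.projIcc 0 1 zero_le_one z.1, ⟨z.2, hz⟩) : Euc d) else y
    have hH' : ∀ t ∈ Icc (0 : ℝ) 1, ∀ (x) (hx : x ∈ simpFaceBoundary S),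
        H' (t, x) = H (Set.projIcc 0 1 zero_le_one t, ⟨x, hx⟩) := fun t _ x hx => dif_pos hx
    obtain ⟨G, hG, hGH, hGU⟩ := exists_continuous_extension_of_homotopy
      (C := simpFace S) (isCompact_simpFaceBoundary S) (U := {p}ᶜ) isOpen_compl_singleton
      (K := fun _ => (y : Euc d)) continuous_const (fun _ _ => y.2) (H := H')
      (by
        rw [continuousOn_iff_continuous_domRestrict]
        have : Continuous fun z : (Icc 0 1 ×ˢ simpFaceBoundary S :
            Set (ℝ × (Fin (N + 1) → ℝ))) =>
            (H (Set.projIcc 0 1 zero_le_one z.1.1, ⟨z.1.2, z.2.2⟩) : Euc d) := by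
          have h1 : Continuous (Set.projIcc (0 : ℝ) 1 zero_le_one) := continuous_projIcc
          fun_prop
        refine this.congr fun z => ?_
        exact (hH' _ z.2.1 _ z.2.2).symm)
      (by
        rintro ⟨t, x⟩ ⟨ht, hx⟩
        rw [hH' t ht x hx]
        exact Subtype.prop _)
      (fun x hx => by rw [hH' 1 (by simp) x hx]; simp)
    obtain ⟨x, hx, hxp⟩ := h G hG fun x hx => by
      rw [hGH x hx, hH' 0 (by simp) x hx, ← hgf ⟨x, hx⟩]
      simp
    exact hGU hx hxp

section Closeness

variable {d N : ℕ} {f : (Fin (N + 1) → ℝ) → Euc d}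

/-- The condition that the face `σ_S` imposes on a winding point `p`. -/
def IsWindingPoint (d : ℕ) {N : ℕ} (f : (Fin (N + 1) → ℝ) → Euc d)
    (S : Finset (Fin (N + 1))) (p : Euc d) : Prop :=
  (S.card ≤ d → p ∈ f '' simpFace S) ∧ (S.card = d + 1 → InWne d f S p)

/-- The set of pairs `(f, p)` with `p` not a winding point of `f` is open. -/
theorem exists_not_isWindingPoint_of_near (hd : 1 ≤ d) (hf : ContinuousOn f (skel N (d - 1)))
    {S : Finset (Fin (N + 1))} (hS : S.Nonempty) {p : Euc d} (hp : ¬ IsWindingPoint d f S p) :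
    ∃ δ > 0, ∀ f' : (Fin (N + 1) → ℝ) → Euc d, ContinuousOn f' (skel N (d - 1)) →
      (∀ x ∈ skel N (d - 1), ‖f' x - f x‖ < δ) → ∀ p', dist p' p < δ →
      ¬ IsWindingPoint d f' S p' := by
  have key : ∀ g : (Fin (N + 1) → ℝ) → Euc d, ContinuousOn g (simpFace S) →
      p ∉ g '' simpFace S → ∃ δ > 0, ∀ x ∈ simpFace S, 2 * δ ≤ dist (g x) p := by
    intro g hg hpg
    obtain ⟨r, hr, hr'⟩ := Metric.isOpen_iff.1
      ((isCompact_simpFace S).image_of_continuousOn hg).isClosed.isOpen_compl p hpg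
    refine ⟨r / 2, half_pos hr, fun x hx => ?_⟩
    by_contra! h
    exact hr' (mem_ball.2 (by linarith)) ⟨x, hx, rfl⟩
  rw [IsWindingPoint, not_and_or] at hp
  rcases hp with hp | hp
  · push Not at hp
    obtain ⟨hc, hp⟩ := hp
    have hsub : simpFace S ⊆ skel N (d - 1) := simpFace_subset_skel (by omega)
    obtain ⟨δ, hδ, hδ'⟩ := key f (hf.mono hsub) hp
    refine ⟨δ, hδ, fun f' _ hff' p' hp' hW => ?_⟩
    obtain ⟨x, hx, rfl⟩ := hW.1 hc
    have h1 := hff' x (hsub hx)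
    rw [← dist_eq_norm] at h1
    have := hδ' x hx
    have := dist_triangle_left (f x) p (f' x)
    linarith
  · push Not at hp
    obtain ⟨hc, hp⟩ := hp
    have hsub : simpFaceBoundary S ⊆ skel N (d - 1) := simpFaceBoundary_subset_skel (by omega)
    rw [inWne_iff hS] at hp
    push Not at hp
    obtain ⟨G, hG, hGf, hGp⟩ := hp
    obtain ⟨δ, hδ, hδ'⟩ := key G hG.continuousOn hGp
    refine ⟨δ, hδ, fun f' hf' hff' p' hp' hW => ?_⟩
    obtain ⟨g, hg, hgf, hgδ⟩ := ContinuousOn.exists_continuous_eqOn_norm_le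
      (isCompact_simpFaceBoundary S).isClosed ((hf'.sub hf).mono hsub) hδ
      fun x hx => (hff' x (hsub hx)).le
    obtain ⟨x, hx, rfl⟩ := (inWne_iff hS).1 (hW.2 hc) (G + g) (hG.add hg) fun x hx => by
      simp [hGf hx, hgf hx]
    have h1 := hδ' x hx
    have h2 := dist_triangle_left (G x) p ((G + g) x)
    have h3 : dist ((G + g) x) (G x) = ‖g x‖ := by simp [dist_eq_norm]
    have := hgδ x
    linarith

theorem exists_norm_le_of_isWindingPoint (hd : 1 ≤ d) (hf : ContinuousOn f (skel N (d - 1))) :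
    ∃ R, ∀ f' : (Fin (N + 1) → ℝ) → Euc d, ContinuousOn f' (skel N (d - 1)) →
      (∀ x ∈ skel N (d - 1), ‖f' x - f x‖ < 1) → ∀ S : Finset (Fin (N + 1)), S.Nonempty →
      S.card ≤ d + 1 → ∀ p, IsWindingPoint d f' S p → ‖p‖ ≤ R := by
  obtain ⟨M, hM⟩ := (isCompact_skel N (d - 1)).exists_bound_of_continuousOn hf
  refine ⟨|M| + 1, fun f' hf' hff' S hS hc p hW => ?_⟩
  have hb : ∀ x ∈ skel N (d - 1), ‖f' x‖ ≤ |M| + 1 := fun x hx => by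
    have h1 := hM x hx
    have h2 := hff' x hx
    have h3 := norm_le_norm_add_norm_sub' (f' x) (f x)
    have h4 := le_abs_self M
    linarith
  rcases Nat.lt_or_ge d S.card with h | h
  · have hc' : S.card = d + 1 := by omega
    have hsub : simpFaceBoundary S ⊆ skel N (d - 1) := simpFaceBoundary_subset_skel (by omega)
    obtain ⟨g, hg, hgf, hgM⟩ := ContinuousOn.exists_continuous_eqOn_norm_le
      (isCompact_simpFaceBoundary S).isClosed (hf'.mono hsub)
      (by positivity : 0 < |M| + 1) fun x hx => hb x (hsub hx)
    obtain ⟨x, -, rfl⟩ := (inWne_iff hS).1 (hW.2 hc') g hg hgf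
    exact hgM x
  · obtain ⟨x, hx, rfl⟩ := hW.1 h
    exact hb x (simpFace_subset_skel (by omega) hx)

/-- Winding partitions of a sufficiently close map are winding partitions. -/
theorem exists_isWindingPartition_of_near (hd : 1 ≤ d) (q : ℕ) (hq : 1 ≤ q)
    (hf : ContinuousOn f (skel N (d - 1))) :
    ∃ δ > 0, ∀ f' : (Fin (N + 1) → ℝ) → Euc d, ContinuousOn f' (skel N (d - 1)) →
      (∀ x ∈ skel N (d - 1), ‖f' x - f x‖ < δ) → ∀ P, IsWindingPartition d q f' P →
      IsWindingPartition d q f P := by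
  obtain ⟨R, hR⟩ := exists_norm_le_of_isWindingPoint hd hf
  suffices h : ∀ P, ∃ δ > 0, ∀ f' : (Fin (N + 1) → ℝ) → Euc d,
      ContinuousOn f' (skel N (d - 1)) → (∀ x ∈ skel N (d - 1), ‖f' x - f x‖ < δ) →
      IsWindingPartition d q f' P → IsWindingPartition d q f P by
    choose δ hδ h using h
    refine ⟨Finset.univ.inf' Finset.univ_nonempty δ, (Finset.lt_inf'_iff _).2 fun P _ => hδ P,
      fun f' hf' hff' P hP => h P f' hf' (fun x hx => ?_) hP⟩
    exact (hff' x hx).trans_le (Finset.inf'_le _ (Finset.mem_univ P))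
  intro P
  by_contra! hcon
  choose! g hg hgf hgP hgn using fun n : ℕ => hcon (1 / ((n : ℝ) + 1)) Nat.one_div_pos_of_nat
  obtain ⟨hcard, hne, hle, hdisj, -⟩ := hgP 0
  choose p hp using fun n => (hgP n).2.2.2.2
  obtain ⟨S₀, hS₀⟩ : P.Nonempty := Finset.card_pos.1 (by omega)
  have hbound : ∀ n, p n ∈ closedBall (0 : Euc d) R := fun n => by
    rw [mem_closedBall_zero_iff]
    refine hR (g n) (hg n) (fun x hx => (hgf n x hx).trans_le ?_) S₀ (hne _ hS₀) (hle _ hS₀) _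
      (hp n S₀ hS₀)
    exact (div_le_one (by positivity)).2 (by simp)
  obtain ⟨p₀, -, φ, hφ, hlim⟩ := (isCompact_closedBall (0 : Euc d) R).tendsto_subseq hbound
  refine hgn 0 ⟨hcard, hne, hle, hdisj, p₀, fun S hS => ?_⟩
  by_contra hW
  obtain ⟨δ, hδ, hδ'⟩ := exists_not_isWindingPoint_of_near hd hf (hne S hS) hW
  have hsmall : ∀ᶠ n in atTop, 1 / ((φ n : ℝ) + 1) < δ :=
    (tendsto_one_div_add_atTop_nhds_zero_nat.comp hφ.tendsto_atTop).eventually_lt_const hδ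
  obtain ⟨n, hn1, hn2⟩ := (hsmall.and ((Metric.tendsto_nhds.1 hlim) δ hδ)).exists
  exact hδ' (g (φ n)) (hg _) (fun x hx => (hgf _ x hx).trans hn1) _ hn2 (hp _ S hS)

end Closeness

section GeneralPosition

variable {d N : ℕ}

/-- A nonempty family of pairwise disjoint faces for which generic maps to `ℝ^d` have at most
finitely many points in the common intersection of the images. -/
structure IsSparseFamily (d : ℕ) {N : ℕ} (𝓕 : Finset (Finset (Fin (N + 1)))) : Prop where
  nonempty : 𝓕.Nonempty
  nonempty_of_mem : ∀ S ∈ 𝓕, S.Nonempty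
  disjoint : ∀ S ∈ 𝓕, ∀ T ∈ 𝓕, S ≠ T → Disjoint S T
  card_le : d + ∑ S ∈ 𝓕, S.card ≤ (d + 1) * 𝓕.card

/-- The common points of the images of the faces in a family. -/
def commonPoints (F : (Fin (N + 1) → ℝ) → Euc d) (𝓕 : Finset (Finset (Fin (N + 1)))) :
    Set (Euc d) :=
  {p | ∀ S ∈ 𝓕, p ∈ F '' simpFace S}

theorem isOpen_dense_commonPoints_finite {F : (Fin (N + 1) → ℝ) → Euc d} (hF : ContDiff ℝ 1 F)
    {𝓕 : Finset (Finset (Fin (N + 1)))} (h𝓕 : IsSparseFamily d 𝓕) :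
    ∃ O : Set ((Fin (N + 1) → ℝ) →L[ℝ] Euc d), IsOpen O ∧ Dense O ∧ ∀ a ∈ O,
      (commonPoints (fun x => F x + a x) 𝓕).Finite ∧
      (d + ∑ S ∈ 𝓕, S.card < (d + 1) * 𝓕.card → commonPoints (fun x => F x + a x) 𝓕 = ∅) := by
  classical
  have : Nonempty 𝓕 := h𝓕.nonempty.to_subtype
  choose v hv using fun S : 𝓕 => h𝓕.nonempty_of_mem S S.2
  let ℓ : 𝓕 → (Fin (N + 1) → ℝ) →L[ℝ] ℝ := fun S => ∑ w ∈ S.1, ContinuousLinearMap.proj w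
  have hℓ : ∀ (S : 𝓕) (x : Fin (N + 1) → ℝ), ℓ S x = ∑ w ∈ S.1, x w := fun S x => by
    simp [ℓ]
  have hcard : ∑ S : 𝓕, Module.finrank ℝ (↥(S.1.erase (v S)) → ℝ) + 𝓕.card =
      ∑ S ∈ 𝓕, S.card := by
    rw [← Finset.sum_coe_sort 𝓕, ← Fintype.card_coe 𝓕, ← Finset.card_univ,
      Finset.card_eq_sum_ones, ← Finset.sum_add_distrib]
    refine Finset.sum_congr rfl fun S _ => ?_
    rw [Module.finrank_fintype_fun_eq_card, Fintype.card_coe,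
      Finset.card_erase_add_one (hv S)]
  have hc := h𝓕.card_le
  have hmul : (d + 1) * 𝓕.card = 𝓕.card * d + 𝓕.card := by ring
  obtain ⟨O, hO, hOd, hO'⟩ := isOpen_dense_general_position hF
    (ρ := fun S : 𝓕 => faceChart S.1 (v S)) (fun S => contDiff_faceChart _ _)
    (K := fun S : 𝓕 => (fun x u => x u) '' simpFace S.1)
    (fun S => (isCompact_simpFace S.1).image (by fun_prop)) (ℓ := ℓ)
    (fun S z => (hℓ _ _).trans (sum_faceChart (hv S) z))
    (fun S T z hST => (hℓ _ _).trans (Finset.sum_eq_zero fun w hw =>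
      faceChart_of_notMem (hv T) z (Finset.disjoint_left.1
        (h𝓕.disjoint S S.2 T T.2 (Subtype.coe_injective.ne hST)) hw)))
    (by rw [finrank_euclideanSpace_fin, Fintype.card_coe]; omega)
  refine ⟨O, hO, hOd, fun a ha => ?_⟩
  have hsub : commonPoints (fun x => F x + a x) 𝓕 = {p | ∀ S : 𝓕,
      ∃ z ∈ (fun (x : Fin (N + 1) → ℝ) (u : ↥(S.1.erase (v S))) => x u) '' simpFace S.1,
      F (faceChart S.1 (v S) z) + a (faceChart S.1 (v S) z) = p} := by
    ext p
    simp only [commonPoints, mem_ofPred_eq, Subtype.forall, exists_mem_image]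
    refine forall₂_congr fun S hS => exists_congr fun x => and_congr_right fun hx => ?_
    rw [faceChart_restrict (hv ⟨S, hS⟩) hx]
  rw [hsub]
  refine ⟨(hO' a ha).1, fun hlt => (hO' a ha).2 ?_⟩
  rw [finrank_euclideanSpace_fin, Fintype.card_coe]
  omega

theorem exists_commonPoints_finite {F : (Fin (N + 1) → ℝ) → Euc d} (hF : ContDiff ℝ 1 F)
    {ε : ℝ} (hε : 0 < ε) :
    ∃ a : (Fin (N + 1) → ℝ) →L[ℝ] Euc d, ‖a‖ < ε ∧
      ∀ 𝓕 : Finset (Finset (Fin (N + 1))), IsSparseFamily d 𝓕 →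
        (commonPoints (fun x => F x + a x) 𝓕).Finite ∧
        (d + ∑ S ∈ 𝓕, S.card < (d + 1) * 𝓕.card →
          commonPoints (fun x => F x + a x) 𝓕 = ∅) := by
  choose O hO hOd hO' using fun 𝓕 : {𝓕 : Finset (Finset (Fin (N + 1))) // IsSparseFamily d 𝓕} =>
    isOpen_dense_commonPoints_finite hF 𝓕.2
  obtain ⟨a, ha, ha'⟩ := (dense_iInter_of_isOpen hO hOd).exists_mem_open
    (isOpen_ball (x := 0) (ε := ε)) ⟨0, mem_ball_self hε⟩
  exact ⟨a, mem_ball_zero_iff.1 ha', fun 𝓕 h𝓕 => hO' ⟨𝓕, h𝓕⟩ a (mem_iInter.1 ha _)⟩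

end GeneralPosition

section Construction

variable {d N : ℕ}

/-- Extensions of a map over the faces of dimension `k + 1` that agree with it on the boundaries
fit together. -/
theorem exists_continuous_eqOn_simpFace {k : ℕ} {f : (Fin (N + 1) → ℝ) → Euc d}
    (hf : Continuous f) {G : Finset (Fin (N + 1)) → (Fin (N + 1) → ℝ) → Euc d}
    (hG : ∀ S, S.card = k + 2 → Continuous (G S))
    (hGf : ∀ S, S.card = k + 2 → EqOn (G S) f (simpFaceBoundary S)) :
    ∃ F, Continuous F ∧ EqOn F f (skel N k) ∧
      ∀ S, S.card = k + 2 → EqOn F (G S) (simpFace S) := by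
  classical
  let supp : (Fin (N + 1) → ℝ) → Finset (Fin (N + 1)) := fun x =>
    Finset.univ.filter fun i => x i ≠ 0
  let h : (Fin (N + 1) → ℝ) → Euc d := fun x => if (supp x).card = k + 2 then G (supp x) x else f x
  have hskel : EqOn h f (skel N k) := fun x hx => by
    refine if_neg fun hc => ?_
    have h1 : {i | x i ≠ 0}.ncard ≤ k + 1 := hx.2
    have h2 : (supp x).card = {i | x i ≠ 0}.ncard := by
      rw [← Set.ncard_coe_finset, Finset.coe_filter_univ]
    omega
  have hface : ∀ S : Finset (Fin (N + 1)), S.card = k + 2 → EqOn h (G S) (simpFace S) := by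
    intro S hS x hx
    have hsub : supp x ⊆ S := fun i hi => by
      by_contra hiS
      exact (Finset.mem_filter.1 hi).2 (hx.2 i hiS)
    by_cases hc : (supp x).card = k + 2
    · have : supp x = S := Finset.eq_of_subset_of_card_le hsub (by omega)
      simp only [h, this, hS, if_true]
    · have hne : supp x ≠ S := fun h' => hc (h' ▸ hS)
      obtain ⟨i, hiS, hi⟩ := Finset.exists_of_ssubset (hsub.ssubset_of_ne hne)
      simp only [h, hc, if_false]
      exact (hGf S hS ⟨hx, i, hiS, by simpa [supp] using hi⟩).symm
  have hcont : ContinuousOn h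
      (⋃ S : {S : Finset (Fin (N + 1)) // S.card = k + 2}, simpFace S.1) :=
    (locallyFinite_of_finite _).continuousOn_iUnion
      (fun S => (isCompact_simpFace S.1).isClosed)
      fun S => (hG S.1 S.2).continuousOn.congr (hface S.1 S.2)
  have hclosed : IsClosed (⋃ S : {S : Finset (Fin (N + 1)) // S.card = k + 2}, simpFace S.1) :=
    isClosed_iUnion_of_finite fun S => (isCompact_simpFace S.1).isClosed
  have hclosed' := (isCompact_skel N k).isClosed
  obtain ⟨F, hF, hFh⟩ := (hcont.union_of_isClosed (hf.continuousOn.congr hskel) hclosed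
    hclosed').exists_continuous_eqOn (hclosed.union hclosed')
  refine ⟨F, hF, fun x hx => (hFh (Or.inr hx)).trans (hskel hx), fun S hS x hx => ?_⟩
  exact (hFh (Or.inl (mem_iUnion.2 ⟨⟨S, hS⟩, hx⟩))).trans (hface S hS hx)

/-- Every continuous map on the skeleton is close to one with only finitely many common points
of sparse families of faces. -/
theorem exists_near_commonPoints_finite {k : ℕ} {f : (Fin (N + 1) → ℝ) → Euc d}
    (hf : ContinuousOn f (skel N k)) {ε : ℝ} (hε : 0 < ε) :
    ∃ F : (Fin (N + 1) → ℝ) → Euc d, Continuous F ∧ (∀ x ∈ skel N k, ‖F x - f x‖ < ε) ∧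
      ∀ 𝓕 : Finset (Finset (Fin (N + 1))), IsSparseFamily d 𝓕 →
        (commonPoints F 𝓕).Finite ∧
        (d + ∑ S ∈ 𝓕, S.card < (d + 1) * 𝓕.card → commonPoints F 𝓕 = ∅) := by
  obtain ⟨g, hg, hgf⟩ := hf.exists_continuous_eqOn (isCompact_skel N k).isClosed
  obtain ⟨g₁, hg₁, hgg₁, -⟩ := hg.exists_contDiff_approx (ε := fun _ => ε / 2) 1 continuous_const
    fun _ => half_pos hε
  obtain ⟨a, ha, ha'⟩ := exists_commonPoints_finite hg₁ (half_pos hε)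
  refine ⟨fun x => g₁ x + a x, hg₁.continuous.add a.continuous, fun x hx => ?_, ha'⟩
  have hx1 : ‖x‖ ≤ 1 := by
    refine (pi_norm_le_iff_of_nonneg zero_le_one).2 fun i => ?_
    rw [Real.norm_of_nonneg (hx.1.1 i), ← hx.1.2]
    exact Finset.single_le_sum (fun j _ => hx.1.1 j) (Finset.mem_univ i)
  have h1 := hgg₁ x
  rw [dist_eq_norm, hgf hx] at h1
  have h2 : ‖a x‖ ≤ ‖a‖ := (a.le_opNorm x).trans (mul_le_of_le_one_right (norm_nonneg a) hx1)
  have h3 := norm_add_le (g₁ x - f x) (a x)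
  rw [show g₁ x + a x - f x = g₁ x - f x + a x by abel]
  linarith

theorem sum_card_le_of_disjoint {P : Finset (Finset (Fin (N + 1)))}
    (hP : ∀ S ∈ P, ∀ T ∈ P, S ≠ T → Disjoint S T) : ∑ S ∈ P, S.card ≤ N + 1 := by
  classical
  rw [← Finset.card_biUnion (t := fun S => S) hP]
  exact (Finset.card_le_univ _).trans_eq (Fintype.card_fin _)

/-- The faces of dimension less than `d` in a partition with sufficiently many blocks are sparse,
and strictly so if some block has dimension more than `d`. -/
theorem isSparseFamily_filter (hd : 1 ≤ d) {P : Finset (Finset (Fin (N + 1)))}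
    (hN : N + (d + 1) = (d + 1) * P.card) (hne : ∀ S ∈ P, S.Nonempty)
    (hP : ∀ S ∈ P, ∀ T ∈ P, S ≠ T → Disjoint S T) :
    IsSparseFamily d (P.filter fun S => S.card ≤ d) ∧
      ((∃ S ∈ P, d + 1 < S.card) → d + ∑ S ∈ P.filter (fun S => S.card ≤ d), S.card <
        (d + 1) * (P.filter fun S => S.card ≤ d).card) := by
  have h1 := sum_card_le_of_disjoint hP
  have h2 := Finset.sum_filter_add_sum_filter_not P (fun S => S.card ≤ d) fun S => S.card
  have h3 := Finset.card_filter_add_card_filter_not (s := P) fun S => S.card ≤ d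
  have hbig : ∀ S ∈ P.filter (fun S => ¬ S.card ≤ d), d + 1 ≤ S.card := fun S hS => by
    have := (Finset.mem_filter.1 hS).2
    omega
  have h4 := Finset.card_nsmul_le_sum _ (fun S => Finset.card S) _ hbig
  rw [smul_eq_mul, mul_comm] at h4
  rw [← h3, mul_add] at hN
  have hle : d + ∑ S ∈ P.filter (fun S => S.card ≤ d), S.card ≤
      (d + 1) * (P.filter fun S => S.card ≤ d).card := by omega
  refine ⟨⟨Finset.card_pos.1 (Nat.pos_of_ne_zero fun h0 => ?_),
    fun S hS => hne S (Finset.mem_filter.1 hS).1,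
    fun S hS T hT => hP S (Finset.mem_filter.1 hS).1 T (Finset.mem_filter.1 hT).1, hle⟩, ?_⟩
  · rw [h0] at hle
    omega
  · rintro ⟨S, hS, hSd⟩
    have h5 := Finset.sum_lt_sum hbig ⟨S, Finset.mem_filter.2 ⟨hS, by omega⟩, hSd⟩
    rw [Finset.sum_const, smul_eq_mul, mul_comm] at h5
    omega

/-- Every continuous map on the `(d - 1)`-skeleton is close to a map all of whose Tverberg
partitions are winding partitions. -/
theorem exists_near_isWindingPartition (hd : 3 ≤ d) {q : ℕ} (hN : N + (d + 1) = (d + 1) * q)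
    {f : (Fin (N + 1) → ℝ) → Euc d} (hf : ContinuousOn f (skel N (d - 1))) {ε : ℝ} (hε : 0 < ε) :
    ∃ F : (Fin (N + 1) → ℝ) → Euc d, Continuous F ∧
      (∀ x ∈ skel N (d - 1), ‖F x - f x‖ < ε) ∧
      ∀ P, IsTverbergPartition q F P → IsWindingPartition d q F P := by
  classical
  obtain ⟨g, hg, hgf, hgen⟩ := exists_near_commonPoints_finite hf hε
  have hQ : (⋃ 𝓕 ∈ {𝓕 : Finset (Finset (Fin (N + 1))) | IsSparseFamily d 𝓕},
      commonPoints g 𝓕).Finite := (Set.toFinite _).biUnion fun 𝓕 h𝓕 => (hgen 𝓕 h𝓕).1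
  let Q : Finset (Euc d) := hQ.toFinset
  have hG : ∀ S : Finset (Fin (N + 1)), ∃ G : (Fin (N + 1) → ℝ) → Euc d,
      S.card = d - 1 + 2 → Continuous G ∧ EqOn G g (simpFaceBoundary S) ∧
      ∀ x ∈ simpFace S, G x ∈ Q → InWne d g S (G x) := by
    intro S
    by_cases hS : S.card = d - 1 + 2
    · have hne : S.Nonempty := Finset.card_pos.1 (by omega)
      obtain ⟨v, hv⟩ := hne
      obtain ⟨G, hG, hGg, hGQ⟩ := exists_extension_avoiding_finite (E := Euc d)
        (D := ↥(S.erase v) → ℝ) (by simpa using hd)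
        (by
          rw [Module.finrank_fintype_fun_eq_card, Fintype.card_coe, Finset.card_erase_of_mem hv,
            finrank_euclideanSpace_fin]
          omega) (isCompact_simpFace S)
        (isCompact_simpFaceBoundary S) (simpFaceBoundary_subset S) (contDiff_faceChart S v)
        (simpFace_subset_range_faceChart hv) hg (Q.filter fun p => ¬ InWne d g S p)
        fun p hp => by
          have := (Finset.mem_filter.1 hp).2
          rw [inWne_iff ⟨v, hv⟩] at this
          push Not at this
          obtain ⟨G, hG, hGg, hGp⟩ := this
          exact ⟨G, hG, hGg, fun x hx h => hGp ⟨x, hx, h⟩⟩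
      refine ⟨G, fun _ => ⟨hG, hGg, fun x hx hxQ => ?_⟩⟩
      by_contra h
      exact hGQ x hx (Finset.mem_filter.2 ⟨hxQ, h⟩)
    · exact ⟨g, fun h => absurd h hS⟩
  choose G hG using hG
  obtain ⟨F, hF, hFg, hFG⟩ := exists_continuous_eqOn_simpFace hg (fun S hS => (hG S hS).1)
    fun S hS => (hG S hS).2.1
  refine ⟨F, hF, fun x hx => by rw [hFg hx]; exact hgf x hx, ?_⟩
  rintro P ⟨hcard, hne, hdisj, p, hp⟩
  have hp' : ∀ S ∈ P, p ∈ F '' simpFace S := fun S hS => mem_iInter₂.1 hp S hS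
  obtain ⟨hsparse, hstrict⟩ := isSparseFamily_filter (by omega) (hcard ▸ hN) hne hdisj
  have hcommon : p ∈ commonPoints g (P.filter fun S => S.card ≤ d) := by
    intro S hS
    obtain ⟨hS, hSd⟩ := Finset.mem_filter.1 hS
    obtain ⟨x, hx, rfl⟩ := hp' S hS
    exact ⟨x, hx, (hFg (simpFace_subset_skel (by omega) hx)).symm⟩
  have hpQ : p ∈ Q := hQ.mem_toFinset.2 (mem_biUnion hsparse hcommon)
  refine ⟨hcard, hne, fun S hS => ?_, hdisj, p, fun S hS => ⟨fun _ => hp' S hS, fun hSd => ?_⟩⟩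
  · by_contra! hSd
    have := (hgen _ hsparse).2 (hstrict ⟨S, hS, hSd⟩)
    rw [this] at hcommon
    exact hcommon
  · have hSd' : S.card = d - 1 + 2 := by omega
    obtain ⟨x, hx, rfl⟩ := hp' S hS
    rw [hFG S hSd' hx] at hpQ ⊢
    have := (hG S hSd').2.2 x hx hpQ
    rw [inWne_iff (hne S hS)] at this ⊢
    exact fun G' hG' hG'F => this G' hG' fun y hy =>
      (hG'F hy).trans (hFg (simpFaceBoundary_subset_skel hSd' hy))

end Construction

/-- (a) Every winding partition of the restriction of `F` to the `(d-1)`-skeleton is a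
Tverberg partition of `F`. (b) For `d ≥ 3`, any continuous map on the `(d-1)`-skeleton
can be slightly distorted and extended to the full simplex so that every Tverberg
partition of the extension is a winding partition of the original map. -/
theorem winding_vs_tverberg (d q : ℕ) (hd : 1 ≤ d) (hq : 1 ≤ q) :
    (∀ F : (Fin ((d+1)*(q-1)+1) → ℝ) → Euc d,
      ContinuousOn F (stdSimp ((d+1)*(q-1))) →
      ∀ P : Finset (Finset (Fin ((d+1)*(q-1)+1))),
        IsWindingPartition d q F P → IsTverbergPartition q F P) ∧
    (3 ≤ d →
      ∀ f : (Fin ((d+1)*(q-1)+1) → ℝ) → Euc d,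
        ContinuousOn f (skel ((d+1)*(q-1)) (d-1)) →
        ∀ ε > (0:ℝ),
        ∃ F : (Fin ((d+1)*(q-1)+1) → ℝ) → Euc d,
          ContinuousOn F (stdSimp ((d+1)*(q-1))) ∧
          (∀ x ∈ skel ((d+1)*(q-1)) (d-1), ‖F x - f x‖ < ε) ∧
          ∀ P : Finset (Finset (Fin ((d+1)*(q-1)+1))),
            IsTverbergPartition q F P → IsWindingPartition d q f P) := by
  refine ⟨?_, ?_⟩
  · rintro F hF P ⟨hcard, hne, hle, hdisj, p, hp⟩
    obtain ⟨G, hG, hGF⟩ := hF.exists_continuous_eqOn (isCompact_stdSimp _).isClosed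
    refine ⟨hcard, hne, hdisj, p, mem_iInter₂.2 fun S hS => ?_⟩
    rcases (hle S hS).eq_or_lt with h | h
    · obtain ⟨x, hx, hxp⟩ := (inWne_iff (hne S hS)).1 ((hp S hS).2 h) G hG
        fun x hx => hGF hx.1.1
      exact ⟨x, hx, (hGF hx.1).symm.trans hxp⟩
    · exact (hp S hS).1 (Nat.lt_succ_iff.1 h)
  · intro hd3 f hf ε hε
    obtain ⟨δ, hδ, hnear⟩ := exists_isWindingPartition_of_near hd q hq hf
    have hN : (d + 1) * (q - 1) + (d + 1) = (d + 1) * q := by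
      rw [← Nat.mul_succ, Nat.succ_eq_add_one, Nat.sub_add_cancel hq]
    obtain ⟨F, hF, hFf, hP⟩ := exists_near_isWindingPartition hd3 hN hf (lt_min hε hδ)
    exact ⟨F, hF.continuousOn, fun x hx => (hFf x hx).trans_le (min_le_left _ _),
      fun P h => hnear F hF.continuousOn (fun x hx => (hFf x hx).trans_le (min_le_right _ _)) P
        (hP P h)⟩
end
end

section
/- There exists a continuous map f : S¹ → ℝ² such that f, considered as a continuous map from S¹ into the subspace W_{≠0}(f) of ℝ², is not nullhomotopic (not homotopic to a constant map). -/
noncomputable section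

/-- The Euclidean plane `ℝ²`. -/
abbrev E2 : Type := EuclideanSpace ℝ (Fin 2)

/-- The unit circle `S¹ ⊆ ℝ²`. -/
abbrev circleS : Set E2 := Metric.sphere (0 : E2) 1

/-- `W_{≠0}(f)`: the image of `f` together with all points `x` not in the image
such that the corestriction of `f` to `ℝ² \ {x}` is not nullhomotopic. -/
def Wne (f : C(↥circleS, E2)) : Set E2 :=
  Set.range ⇑f ∪ {x | x ∉ Set.range ⇑f ∧
    ¬ ∃ (g : C(↥circleS, ↥({x}ᶜ : Set E2))) (y : ↥({x}ᶜ : Set E2)),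
      (∀ z : ↥circleS, (g z : E2) = f z) ∧ g.Homotopic (ContinuousMap.const _ y)}

open Complex

/-- If `g` is nullhomotopic, then every lift of `g` along a closed path is closed. -/
theorem IsCoveringMap.lift_closed_of_nullhomotopic {E X A : Type*} [TopologicalSpace E]
    [TopologicalSpace X] [TopologicalSpace A] {p : E → X} (cov : IsCoveringMap p)
    {g : C(A, X)} {y : X} (hg : g.Homotopic (ContinuousMap.const A y))
    (ρ : C(unitInterval, A)) (hρ : ρ 0 = ρ 1) (Γ : C(unitInterval, E)) (hΓ : ∀ s, p (Γ s) = g (ρ s)) :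
    Γ 0 = Γ 1 := by
  obtain ⟨H⟩ := hg
  let K : C(unitInterval × unitInterval, X) := ⟨fun q ↦ H (q.1, ρ q.2), by fun_prop⟩
  have K_zero : ∀ s, K (0, s) = p (Γ s) := fun s ↦ by simp [K, hΓ]
  let L := cov.liftHomotopy K Γ K_zero
  have L_lifts : ∀ q, p (L q) = K q := congr_fun (cov.liftHomotopy_lifts K Γ K_zero)
  have L_zero : ∀ s, L (0, s) = Γ s := cov.liftHomotopy_zero K Γ K_zero
  have top : L (1, 0) = L (1, 1) :=
    cov.const_of_comp (g := fun s : unitInterval ↦ L (1, s)) (by fun_prop)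
      (fun s s' ↦ by simp [L_lifts, K]) 0 1
  have sides : (fun t : unitInterval ↦ L (t, 0)) = fun t : unitInterval ↦ L (t, 1) :=
    cov.eq_of_comp_eq (by fun_prop) (by fun_prop)
      (funext fun t ↦ by simp [L_lifts, K, hρ]) 1 top
  simpa [L_zero] using congr_fun sides 0

/-- The cubic `z ^ 3 - 3 * z` is a covering map away from its critical values `±2`. -/
theorem isCoveringMapOn_cubic :
    IsCoveringMapOn (fun z : ℂ ↦ z ^ 3 - 3 * z) {2, -2}ᶜ := by
  have h := (Polynomial.X ^ 3 - 3 * Polynomial.X : Polynomial ℂ).isCoveringMapOn_eval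
  have eval_eq : (Polynomial.X ^ 3 - 3 * Polynomial.X : Polynomial ℂ).eval =
      fun z : ℂ ↦ z ^ 3 - 3 * z := by
    ext z; simp
  rw [eval_eq] at h
  refine h.mono (Set.compl_subset_compl.mpr ?_)
  rintro _ ⟨z, hz, rfl⟩
  have hz' : 3 * ((z - 1) * (z + 1)) = 0 := by
    have : 3 * z ^ 2 - 3 = 0 := by simpa [one_add_one_eq_two, two_add_one_eq_three] using hz
    linear_combination this
  rcases mul_eq_zero.mp ((mul_eq_zero.mp hz').resolve_left (by norm_num)) with h1 | h1
  · right; rw [Set.mem_singleton_iff, sub_eq_zero.mp h1]; norm_num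
  · left; rw [eq_neg_of_add_eq_zero_left h1]; norm_num

/-- The isometry identifying `ℂ` with the Euclidean plane. -/
def planeIso : ℂ ≃ₗᵢ[ℝ] E2 := Complex.orthonormalBasisOneI.repr

theorem planeIso_apply_zero (z : ℂ) : planeIso z 0 = z.re := by
  simp [planeIso]

theorem planeIso_apply_one (z : ℂ) : planeIso z 1 = z.im := by
  simp [planeIso]

attribute [irreducible] planeIso

/-- A map of the form `c + exp ∘ h` is nullhomotopic in the complement of `c`. -/
theorem nullhomotopic_compl_singleton_of_exp {A : Type*} [TopologicalSpace A] (f : C(A, E2))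
    (h : C(A, ℂ)) (c : ℂ) (hf : ∀ z, f z = planeIso (c + exp (h z))) :
    ∃ (g : C(A, ↥({planeIso c}ᶜ : Set E2))) (y : ↥({planeIso c}ᶜ : Set E2)),
      (∀ z, (g z : E2) = f z) ∧ g.Homotopic (ContinuousMap.const _ y) := by
  have ne : ∀ w : ℂ, planeIso (c + exp w) ∈ ({planeIso c}ᶜ : Set E2) := fun w hw ↦
    exp_ne_zero w (by simpa using planeIso.injective hw)
  let k : C(ℂ, ↥({planeIso c}ᶜ : Set E2)) :=
    ⟨fun w ↦ ⟨planeIso (c + exp w), ne w⟩,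
      (planeIso.continuous.comp (by fun_prop)).subtype_mk _⟩
  refine ⟨k.comp h, k 0, fun z ↦ (hf z).symm, ?_⟩
  have : h.Homotopic (ContinuousMap.const A 0) :=
    ⟨{ toFun := fun q ↦ (1 - (q.1 : ℝ) : ℂ) * h q.2
       continuous_toFun := by fun_prop
       map_zero_left := fun z ↦ by simp
       map_one_left := fun z ↦ by simp }⟩
  exact (ContinuousMap.Homotopic.refl k).comp this

/-- The loop running through `F` on the upper half circle, parametrized by the first coordinate,
and constant on the lower half circle. -/
def archLoop {Y : Type*} [TopologicalSpace Y] (F : C(ℝ, Y)) (hF : F (-1) = F 1) :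
    C(↥circleS, Y) where
  toFun z := if 0 ≤ (z : E2) 1 then F ((z : E2) 0) else F 1
  continuous_toFun := by
    refine Continuous.if_le (by fun_prop) (by fun_prop) (by fun_prop) (by fun_prop) ?_
    rintro ⟨z, hz⟩ h
    have hz0 : z 0 ^ 2 = 1 := by
      have := EuclideanSpace.norm_sq_eq z
      rw [mem_sphere_zero_iff_norm.mp hz] at this
      simp only [Fin.sum_univ_two, ← (show (0 : ℝ) = z 1 from h)] at this
      simpa using this.symm
    rcases eq_or_eq_neg_of_sq_eq_sq (z 0) 1 (by rw [hz0, one_pow]) with h0 | h0 <;> simp [h0, hF]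

/-- An arc passing above `±1` and below `±2`. -/
def arc : C(ℝ, ℂ) where
  toFun t := ⟨√6 * t, (6 * t ^ 2 - 2) * (6 * t ^ 2 - 5) / 4⟩
  continuous_toFun := by
    simp only [mk_eq_add_mul_I]
    fun_prop

theorem arc_one : arc 1 = ⟨√6, 1⟩ := by
  simp only [arc, ContinuousMap.coe_mk]; norm_num

theorem arc_neg_one : arc (-1) = ⟨-√6, 1⟩ := by
  simp only [arc, ContinuousMap.coe_mk]; norm_num

/-- The image of `arc` under the cubic `z ^ 3 - 3 * z`. -/
def cubicArc : C(ℝ, ℂ) := ⟨fun t ↦ arc t ^ 3 - 3 * arc t, by fun_prop⟩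

theorem cubicArc_neg_one : cubicArc (-1) = cubicArc 1 := by
  simp only [cubicArc, ContinuousMap.coe_mk, arc_one, arc_neg_one]
  apply Complex.ext
  · simp [pow_succ]; ring
  · simp [pow_succ]; ring

theorem neg_I_mul_arc_add_mem_slitPlane {a : ℝ} (ha : a ^ 2 = 1) (t : ℝ) :
    -I * (arc t + a) ∈ slitPlane := by
  have h6 : (√6 : ℝ) ^ 2 = 6 := Real.sq_sqrt (by norm_num)
  by_cases h : √6 * t + a = 0
  · left
    have ht : 6 * t ^ 2 = 1 := by
      rw [← h6, ← mul_pow, eq_neg_of_add_eq_zero_left h, neg_sq, ha]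
    simp [arc, ht]; norm_num
  · right
    simpa [arc, neg_add_eq_zero, eq_neg_iff_add_eq_zero, add_comm] using h

theorem I_mul_arc_sub_mem_slitPlane {a : ℝ} (ha : a ^ 2 = 1) (t : ℝ) :
    I * (arc t - 2 * a) ∈ slitPlane := by
  have h6 : (√6 : ℝ) ^ 2 = 6 := Real.sq_sqrt (by norm_num)
  by_cases h : √6 * t - 2 * a = 0
  · left
    have ht : 6 * t ^ 2 = 4 := by
      rw [← h6, ← mul_pow, sub_eq_zero.mp h, mul_pow, ha]; norm_num
    simp [arc, ht]; norm_num
  · right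
    simpa [arc] using h

/-- A branch of the logarithm of `-I * (w - 2 * a)` along `cubicArc`, for `a = ±1`. -/
def logArc (a : ℝ) (ha : a ^ 2 = 1) : C(ℝ, ℂ) where
  toFun t := 2 * log (-I * (arc t + a)) + log (I * (arc t - 2 * a))
  continuous_toFun :=
    (continuous_const.mul (Continuous.clog (by fun_prop)
      (neg_I_mul_arc_add_mem_slitPlane ha))).add
      (Continuous.clog (by fun_prop) (I_mul_arc_sub_mem_slitPlane ha))

theorem exp_logArc {a : ℝ} (ha : a ^ 2 = 1) (t : ℝ) :
    exp (logArc a ha t) = -I * (cubicArc t - 2 * a) := by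
  have ha' : (a : ℂ) ^ 2 = 1 := by exact_mod_cast ha
  simp only [logArc, cubicArc, ContinuousMap.coe_mk]
  rw [exp_add, two_mul, exp_add, exp_log (slitPlane_ne_zero (neg_I_mul_arc_add_mem_slitPlane ha t)),
    exp_log (slitPlane_ne_zero (I_mul_arc_sub_mem_slitPlane ha t))]
  linear_combination (I * (arc t + a) ^ 2 * (arc t - 2 * a)) * I_sq +
    I * (3 * arc t + 2 * a) * ha'

theorem logArc_neg_one {a : ℝ} (ha : a ^ 2 = 1) : logArc a ha (-1) = logArc a ha 1 := by
  have h6 : (2 : ℝ) < √6 := by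
    rw [Real.lt_sqrt (by norm_num)]; norm_num
  obtain ⟨ha₁, ha₂⟩ := abs_le.mp (sq_le_one_iff_abs_le_one a |>.mp ha.le)
  have im_eq : ∀ t, (logArc a ha t).im =
      2 * arg (-I * (arc t + a)) + arg (I * (arc t - 2 * a)) := fun t ↦ by
    simp [logArc, log_im]
  have near₁ : |arg (-I * (arc 1 + a))| < Real.pi / 2 := by
    rw [abs_arg_lt_pi_div_two_iff]; left; simp [arc_one]
  have near₂ : |arg (-I * (arc (-1) + a))| < Real.pi / 2 := by
    rw [abs_arg_lt_pi_div_two_iff]; left; simp [arc_neg_one]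
  have sign₁ : arg (-I * (arc 1 + a)) < 0 := by
    rw [arg_neg_iff]; simp [arc_one]; linarith
  have sign₂ : 0 ≤ arg (-I * (arc (-1) + a)) := by
    rw [arg_nonneg_iff]; simp [arc_neg_one]; linarith
  have sign₃ : 0 ≤ arg (I * (arc 1 - 2 * a)) := by
    rw [arg_nonneg_iff]; simp [arc_one]; linarith
  have sign₄ : arg (I * (arc (-1) - 2 * a)) < 0 := by
    rw [arg_neg_iff]; simp [arc_neg_one]; linarith
  have le₃ := arg_le_pi (I * (arc 1 - 2 * a))
  have lt₄ := neg_pi_lt_arg (I * (arc (-1) - 2 * a))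
  rw [abs_lt] at near₁ near₂
  apply exp_inj_of_neg_pi_lt_of_le_pi
  · rw [im_eq]; linarith
  · rw [im_eq]; linarith
  · rw [im_eq]; linarith
  · rw [im_eq]; linarith
  · rw [exp_logArc, exp_logArc, cubicArc_neg_one]

/-- A loop in the plane, homotopic in the complement of `±2` to a commutator of the two
generators of the fundamental group. -/
def commutatorLoop : C(↥circleS, E2) :=
  ⟨fun z ↦ planeIso (archLoop cubicArc cubicArc_neg_one z),
    planeIso.continuous.comp (ContinuousMap.continuous _)⟩

theorem planeIso_notMem_Wne_commutatorLoop {a : ℝ} (ha : a ^ 2 = 1) :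
    planeIso (2 * a) ∉ Wne commutatorLoop := by
  have eq_exp : ∀ z, commutatorLoop z =
      planeIso (2 * a + exp (archLoop (logArc a ha) (logArc_neg_one ha) z + log I)) := by
    intro z
    simp only [commutatorLoop, archLoop, ContinuousMap.coe_mk, exp_add, exp_log I_ne_zero]
    congr 1
    split_ifs <;> rw [exp_logArc] <;> ring_nf <;> simp
  have null := nullhomotopic_compl_singleton_of_exp commutatorLoop
    ⟨fun z ↦ archLoop (logArc a ha) (logArc_neg_one ha) z + log I, by fun_prop⟩ (2 * a) eq_exp
  rintro (⟨z, hz⟩ | ⟨-, h⟩)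
  · obtain ⟨g, -, hg, -⟩ := null
    exact (g z).2 ((hg z).trans hz)
  · exact h null

theorem planeIso_exp_mem_circleS (θ : ℝ) : planeIso (exp (θ * I)) ∈ circleS := by
  rw [mem_sphere_zero_iff_norm, planeIso.norm_map, norm_exp_ofReal_mul_I]

/-- The standard parametrization of the circle by the unit interval. -/
def circlePath : C(unitInterval, ↥circleS) where
  toFun s := ⟨planeIso (exp ((2 * Real.pi * s : ℝ) * I)), planeIso_exp_mem_circleS _⟩
  continuous_toFun := (planeIso.continuous.comp (by fun_prop)).subtype_mk fun _ ↦
    planeIso_exp_mem_circleS _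

/-- The lift of `commutatorLoop ∘ circlePath` along the cubic `z ^ 3 - 3 * z`. -/
def liftedArc : C(unitInterval, ℂ) := ⟨fun s ↦ arc (Real.cos (min (2 * Real.pi * s) Real.pi)), by fun_prop⟩

theorem cubic_liftedArc (s : unitInterval) :
    planeIso (liftedArc s ^ 3 - 3 * liftedArc s) = commutatorLoop (circlePath s) := by
  have hs := s.2.1
  have hs' := s.2.2
  have pi_pos := Real.pi_pos
  have key : archLoop cubicArc cubicArc_neg_one (circlePath s) =
      cubicArc (Real.cos (min (2 * Real.pi * s) Real.pi)) := by
    simp only [archLoop, circlePath, ContinuousMap.coe_mk, planeIso_apply_zero,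
      planeIso_apply_one, exp_ofReal_mul_I_re, exp_ofReal_mul_I_im]
    rcases le_or_gt (2 * Real.pi * s) Real.pi with h | h
    · rw [if_pos (Real.sin_nonneg_of_nonneg_of_le_pi (by positivity) h), min_eq_left h]
    · rw [min_eq_right h.le, Real.cos_pi, cubicArc_neg_one]
      split_ifs with h0
      · have sin_nonpos : 0 ≤ Real.sin (2 * Real.pi * s - Real.pi) :=
          Real.sin_nonneg_of_nonneg_of_le_pi (by linarith) (by nlinarith)
        rw [Real.sin_sub_pi] at sin_nonpos
        have sin_eq : Real.sin (2 * Real.pi * s) = 0 := by linarith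
        rcases Real.sin_eq_zero_iff_cos_eq.mp sin_eq with h1 | h1 <;>
          simp [h1, cubicArc_neg_one]
      · rfl
  rw [show commutatorLoop (circlePath s) =
    planeIso (archLoop cubicArc cubicArc_neg_one (circlePath s)) from rfl, key]
  rfl

/-- There is a continuous map `f : S¹ → ℝ²` that is not nullhomotopic as a map
into the subspace `W_{≠0}(f)`. -/
theorem exists_not_nullhomotopic_in_Wne :
    ∃ f : C(↥circleS, E2),
      ¬ ∃ (g : C(↥circleS, ↥(Wne f))) (y : ↥(Wne f)),
        (∀ z : ↥circleS, (g z : E2) = f z) ∧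
        g.Homotopic (ContinuousMap.const _ y) := by
  refine ⟨commutatorLoop, ?_⟩
  rintro ⟨g, y, hg, hom⟩
  have mem : ∀ w ∈ Wne commutatorLoop, planeIso.symm w ∈ ({2, -2}ᶜ : Set ℂ) := by
    rintro w hw (h | h)
    · refine planeIso_notMem_Wne_commutatorLoop (a := 1) (by norm_num) ?_
      rw [planeIso.symm_apply_eq] at h
      simpa [← h] using hw
    · refine planeIso_notMem_Wne_commutatorLoop (a := -1) (by norm_num) ?_
      rw [Set.mem_singleton_iff, planeIso.symm_apply_eq] at h
      simpa [← h] using hw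
  let k : C(↥(Wne commutatorLoop), ↥({2, -2}ᶜ : Set ℂ)) :=
    ⟨fun w ↦ ⟨planeIso.symm w, mem w w.2⟩,
      (planeIso.symm.continuous.comp continuous_subtype_val).subtype_mk _⟩
  have k_hom : (k.comp g).Homotopic (ContinuousMap.const _ (k y)) :=
    (ContinuousMap.Homotopic.refl k).comp hom
  have lifts : ∀ s, liftedArc s ^ 3 - 3 * liftedArc s = k (g (circlePath s)) := fun s ↦ by
    change _ = planeIso.symm (g (circlePath s))
    rw [hg, ← cubic_liftedArc, planeIso.symm_apply_apply]
  have closed := isCoveringMapOn_cubic.isCoveringMap_restrictPreimage.lift_closed_of_nullhomotopic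
    k_hom circlePath (by simp [circlePath, exp_two_pi_mul_I])
    ⟨fun s ↦ ⟨liftedArc s, by
      rw [Set.mem_preimage, lifts]; exact (k (g (circlePath s))).2⟩, by fun_prop⟩
    fun s ↦ Subtype.ext (lifts s)
  have ends : arc 1 = arc (-1) := by
    have pi_pos := Real.pi_pos
    have h1 : min (2 * Real.pi) Real.pi = Real.pi := min_eq_right (by linarith)
    simpa [liftedArc, h1, pi_pos.le] using congr_arg Subtype.val closed
  rw [arc_one, arc_neg_one, Complex.mk.injEq] at ends
  have : (0 : ℝ) < √6 := by positivity
  linarith [ends.1]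
end
end
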